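/- arXiv:1706.07833 — 3 statements merged into one kernel-verified Lean document; each statement's English description precedes it below -/
import Mathlib

section
/- Let x* be a local minimizer of (NLP) at which MFCQ holds. Then for each direction d in the critical cone C(x*) there exists a Lagrange multiplier (λ,μ) ∈ Λ(x*) (depending on d) such that dᵀ∇²ₓₓL(x*,λ,μ)d ≥ 0. -/
open scoped BigOperators Pointwise
open Matrix

attribute [local instance] Classical.propDecidable

noncomputable section

/-- The gradient vector of `φ` at `x` (the vector of partial derivatives). -/
def gradVec {n : ℕ} (φ : (Fin n → ℝ) → ℝ) (x : Fin n → ℝ) : Fin n → ℝ :=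
  fun k => fderiv ℝ φ x (Pi.single k 1)

/-- The quadratic form `d ↦ dᵀ ∇²φ(x) d` of the Hessian of `φ` at `x`. -/
def hessQ {n : ℕ} (φ : (Fin n → ℝ) → ℝ) (x d : Fin n → ℝ) : ℝ :=
  iteratedFDeriv ℝ 2 φ x ![d, d]

/-- Feasibility for the problem (NLP). -/
def Feas {n m p : ℕ} (h : Fin m → (Fin n → ℝ) → ℝ) (g : Fin p → (Fin n → ℝ) → ℝ)
    (x : Fin n → ℝ) : Prop :=
  (∀ i, h i x = 0) ∧ ∀ j, g j x ≤ 0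

/-- The Lagrangian of (NLP). -/
def Lagr {n m p : ℕ} (f : (Fin n → ℝ) → ℝ) (h : Fin m → (Fin n → ℝ) → ℝ)
    (g : Fin p → (Fin n → ℝ) → ℝ) (lam : Fin m → ℝ) (mu : Fin p → ℝ) (x : Fin n → ℝ) : ℝ :=
  f x + ∑ i, lam i * h i x + ∑ j, mu j * g j x

/-- `(lam, mu)` is a Lagrange multiplier at `xs`, i.e. `(lam, mu) ∈ Λ(xs)`. -/
def IsLagMult {n m p : ℕ} (f : (Fin n → ℝ) → ℝ) (h : Fin m → (Fin n → ℝ) → ℝ)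
    (g : Fin p → (Fin n → ℝ) → ℝ) (xs : Fin n → ℝ) (lam : Fin m → ℝ) (mu : Fin p → ℝ) : Prop :=
  (∀ j, 0 ≤ mu j) ∧ fderiv ℝ (Lagr f h g lam mu) xs = 0 ∧ ∀ j, mu j * g j xs = 0

/-- The Mangasarian-Fromovitz constraint qualification at `xs`. -/
def MFCQ {n m p : ℕ} (h : Fin m → (Fin n → ℝ) → ℝ) (g : Fin p → (Fin n → ℝ) → ℝ)
    (xs : Fin n → ℝ) : Prop :=
  LinearIndependent ℝ (fun i : Fin m => fderiv ℝ (h i) xs) ∧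
  ∃ d : Fin n → ℝ, (∀ i, fderiv ℝ (h i) xs d = 0) ∧
    ∀ j, g j xs = 0 → fderiv ℝ (g j) xs d < 0

/-- Membership in the critical cone `C(xs)`. -/
def critCone {n m p : ℕ} (f : (Fin n → ℝ) → ℝ) (h : Fin m → (Fin n → ℝ) → ℝ)
    (g : Fin p → (Fin n → ℝ) → ℝ) (xs d : Fin n → ℝ) : Prop :=
  fderiv ℝ f xs d = 0 ∧ (∀ i, fderiv ℝ (h i) xs d = 0) ∧
    ∀ j, g j xs = 0 → fderiv ℝ (g j) xs d ≤ 0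

/-- Membership in the critical subspace `S(xs)`. -/
def critSub {n m p : ℕ} (h : Fin m → (Fin n → ℝ) → ℝ) (g : Fin p → (Fin n → ℝ) → ℝ)
    (xs d : Fin n → ℝ) : Prop :=
  (∀ i, fderiv ℝ (h i) xs d = 0) ∧ ∀ j, g j xs = 0 → fderiv ℝ (g j) xs d = 0

/-- The Jacobian matrix `J(x)` of equality and active inequality constraints
(activity taken at the base point `xs`). -/
def Jac {n m p : ℕ} (h : Fin m → (Fin n → ℝ) → ℝ) (g : Fin p → (Fin n → ℝ) → ℝ)
    (xs x : Fin n → ℝ) : Matrix (Fin m ⊕ {j : Fin p // g j xs = 0}) (Fin n) ℝ :=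
  Matrix.of fun i k =>
    Sum.elim (fun i' => fderiv ℝ (h i') x (Pi.single k 1))
      (fun j' => fderiv ℝ (g j'.1) x (Pi.single k 1)) i

/-- A first-order cone: the (direct) sum of a linear subspace and a ray. -/
def IsFirstOrderCone {n : ℕ} (K : Set (Fin n → ℝ)) : Prop :=
  ∃ (W : Submodule ℝ (Fin n → ℝ)) (d0 : Fin n → ℝ),
    K = {x | ∃ w ∈ W, ∃ r : ℝ, 0 ≤ r ∧ x = w + r • d0}

/-- The rank of a family of vectors: the dimension of its linear span. -/
def famRank {ι : Type*} {n : ℕ} (v : ι → (Fin n → ℝ)) : ℕ :=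
  Module.finrank ℝ (Submodule.span ℝ (Set.range v))

open Filter Topology Asymptotics

theorem aux_taylor {n : ℕ} (φ : (Fin n → ℝ) → ℝ) (hφ : ContDiff ℝ 2 φ) (xs : Fin n → ℝ) :
    (fun z : Fin n → ℝ => φ (xs + z) - φ xs - fderiv ℝ φ xs z
      - (1/2) * fderiv ℝ (fderiv ℝ φ) xs z z) =o[𝓝 0] (fun z => ‖z‖ ^ 2) := by
  have hsymm : IsSymmSndFDerivAt ℝ φ xs := hφ.contDiffAt.isSymmSndFDerivAt (by simp)
  have hd1 : Differentiable ℝ φ := hφ.differentiable (by norm_num)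
  have hc1 : ContDiff ℝ 1 (fderiv ℝ φ) := hφ.fderiv_right (by norm_num)
  have hd2 : Differentiable ℝ (fderiv ℝ φ) := hc1.differentiable (by norm_num)
  have h2 : HasFDerivAt (fderiv ℝ φ) (fderiv ℝ (fderiv ℝ φ) xs) xs := (hd2 xs).hasFDerivAt
  rw [hasFDerivAt_iff_isLittleO_nhds_zero] at h2
  rw [isLittleO_iff] at h2 ⊢
  intro c hc
  have h2c := h2 hc
  obtain ⟨δ, hδ, hball⟩ := Metric.eventually_nhds_iff_ball.1 h2c
  refine Metric.eventually_nhds_iff_ball.2 ⟨δ, hδ, fun z hz => ?_⟩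
  set B := fderiv ℝ (fderiv ℝ φ) xs with hB
  let F : (Fin n → ℝ) → ℝ := fun z => φ (xs + z) - φ xs - fderiv ℝ φ xs z - (1/2) * B z z
  have hF : ∀ y, HasFDerivAt F (fderiv ℝ φ (xs + y) - fderiv ℝ φ xs - B y) y := by
    intro y
    have e1 : HasFDerivAt (fun y => φ (xs + y)) (fderiv ℝ φ (xs + y)) y := by
      have := (hd1 (xs + y)).hasFDerivAt.comp y ((hasFDerivAt_id y).const_add xs)
      rw [ContinuousLinearMap.comp_id] at this
      exact this
    have e2 : HasFDerivAt (fun y => B y y) (B y + B.flip y) y := by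
      have := (B.hasFDerivAt (x := y)).clm_apply (hasFDerivAt_id y)
      exact this
    have e3 := ((e1.sub_const (φ xs)).sub (fderiv ℝ φ xs).hasFDerivAt).sub (e2.const_mul (1/2 : ℝ))
    refine e3.congr_fderiv ?_
    ext1 v
    have : B v y = B y v := hsymm v y
    have e4 : (1/2 : ℝ) * (B y v + B v y) = B y v := by rw [this]; ring
    simp only [_root_.sub_apply, _root_.smul_apply, _root_.add_apply, smul_eq_mul,
      ContinuousLinearMap.flip_apply, e4]
  have hzn : ‖z‖ < δ := by simpa using hz
  have hmv := Convex.norm_image_sub_le_of_norm_hasFDerivWithin_le (𝕜 := ℝ) (f := F)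
    (f' := fun y => fderiv ℝ φ (xs + y) - fderiv ℝ φ xs - B y) (s := Metric.closedBall 0 ‖z‖)
    (C := c * ‖z‖) (x := 0) (y := z) (fun y _ => (hF y).hasFDerivWithinAt)
    (fun y hy => by
      have hy' : ‖y‖ ≤ ‖z‖ := by simpa using hy
      have := hball y (by simpa using hy'.trans_lt hzn)
      refine this.trans ?_
      gcongr) (convex_closedBall _ _) (by simp) (by simp)
  have h0 : F 0 = 0 := by simp [F]
  rw [h0] at hmv
  simp only [sub_zero] at hmv
  refine hmv.trans (le_of_eq ?_)
  simp
  ring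

theorem aux_curve {n : ℕ} (φ : (Fin n → ℝ) → ℝ) (hφ : ContDiff ℝ 2 φ) (xs d w : Fin n → ℝ)
    (e : ℝ → Fin n → ℝ) (he : e =o[𝓝[>] 0] (fun t : ℝ => t ^ 2)) :
    (fun t : ℝ => φ (xs + (t • d + (t ^ 2 / 2) • w + e t)) - φ xs - t * fderiv ℝ φ xs d
      - t ^ 2 / 2 * (fderiv ℝ φ xs w + fderiv ℝ (fderiv ℝ φ) xs d d)) =o[𝓝[>] 0]
      (fun t : ℝ => t ^ 2) := by
  set z : ℝ → Fin n → ℝ := fun t => t • d + (t ^ 2 / 2) • w + e t with hz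
  set B := fderiv ℝ (fderiv ℝ φ) xs with hB
  have hid : Tendsto (fun t : ℝ => t) (𝓝[>] 0) (𝓝 0) := tendsto_id.mono_left nhdsWithin_le_nhds
  have hsq : (fun t : ℝ => t ^ 2) =o[𝓝[>] 0] (fun t : ℝ => t) := by
    have : (fun t : ℝ => t * t) =o[𝓝[>] 0] (fun t : ℝ => 1 * t) :=
      ((isLittleO_one_iff ℝ).2 hid).mul_isBigO (isBigO_refl _ _)
    simpa [sq] using this
  -- remainder
  set r : ℝ → Fin n → ℝ := fun t => (t ^ 2 / 2) • w + e t with hr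
  have hw2 : (fun t : ℝ => (t ^ 2 / 2) • w) =O[𝓝[>] 0] (fun t : ℝ => t ^ 2) := by
    refine IsBigO.of_bound (‖w‖) (Eventually.of_forall fun t => ?_)
    rw [norm_smul]
    have : ‖t ^ 2 / 2‖ ≤ ‖t ^ 2‖ := by
      rw [Real.norm_of_nonneg (by positivity), Real.norm_of_nonneg (by positivity)]
      nlinarith [sq_nonneg t]
    nlinarith [norm_nonneg w]
  have hr2 : r =O[𝓝[>] 0] (fun t : ℝ => t ^ 2) := hw2.add he.isBigO
  have hr1 : r =o[𝓝[>] 0] (fun t : ℝ => t) := hr2.trans_isLittleO hsq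
  have hd1 : (fun t : ℝ => t • d) =O[𝓝[>] 0] (fun t : ℝ => t) :=
    IsBigO.of_bound (‖d‖) (Eventually.of_forall fun t => by rw [norm_smul, mul_comm])
  have hzr : z = fun t => t • d + r t := by
    funext t; simp [hz, hr, add_assoc]
  have hz1 : z =O[𝓝[>] 0] (fun t : ℝ => t) := by
    rw [hzr]; exact hd1.add hr1.isBigO
  have hz0 : Tendsto z (𝓝[>] 0) (𝓝 0) := hz1.trans_tendsto hid
  have hT := (aux_taylor φ hφ xs).comp_tendsto hz0
  have hT' : (fun t => φ (xs + z t) - φ xs - fderiv ℝ φ xs (z t) - (1/2) * B (z t) (z t))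
      =o[𝓝[>] 0] (fun t : ℝ => t ^ 2) :=
    IsLittleO.trans_isBigO hT (hz1.norm_left.pow 2)
  have hE : (fun t => fderiv ℝ φ xs (e t)) =o[𝓝[>] 0] (fun t : ℝ => t ^ 2) :=
    ((fderiv ℝ φ xs).isBigO_comp e _).trans_isLittleO he
  have hBb : ∀ (u v : ℝ → Fin n → ℝ), u =O[𝓝[>] 0] (fun t : ℝ => t) →
      v =o[𝓝[>] 0] (fun t : ℝ => t) →
      (fun t => B (u t) (v t)) =o[𝓝[>] 0] (fun t : ℝ => t ^ 2) := by
    intro u v hu hv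
    have h1 : (fun t => B (u t) (v t)) =O[𝓝[>] 0] (fun t => ‖u t‖ * ‖v t‖) := by
      refine IsBigO.of_bound ‖B‖ (Eventually.of_forall fun t => ?_)
      rw [Real.norm_of_nonneg (by positivity : 0 ≤ ‖u t‖ * ‖v t‖), ← mul_assoc]
      exact B.le_opNorm₂ _ _
    refine h1.trans_isLittleO ?_
    simpa [sq] using hu.norm_left.mul_isLittleO hv.norm_left
  have hB1 := hBb _ _ hd1 hr1
  have hB2 := hBb _ _ hz1 hr1
  have hsymm : IsSymmSndFDerivAt ℝ φ xs := hφ.contDiffAt.isSymmSndFDerivAt (by simp)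
  have := ((hT'.add hE).add (hB1.const_mul_left (1/2))).add (hB2.const_mul_left (1/2))
  refine this.congr_left fun t => ?_
  have hs : B (r t) d = B d (r t) := hsymm (r t) d
  have e1 : z t = t • d + r t := congrFun hzr t
  have e2 : fderiv ℝ φ xs (z t) = t * fderiv ℝ φ xs d + t ^ 2 / 2 * fderiv ℝ φ xs w
      + fderiv ℝ φ xs (e t) := by simp [hz]
  have e3 : B (z t) (z t) = t ^ 2 * B d d + B (t • d) (r t) + B (z t) (r t) := by
    rw [e1]; simp [hs]; ring
  rw [e2, e3]
  ring

theorem aux_surj {n m : ℕ} (L : Fin m → (Fin n → ℝ) →L[ℝ] ℝ) (hL : LinearIndependent ℝ L) :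
    (ContinuousLinearMap.pi L).range = ⊤ := by
  by_contra hne
  obtain ⟨ψ, hψ0, hψ⟩ := Submodule.exists_le_ker_of_lt_top _ (lt_top_iff_ne_top.2 hne)
  apply hψ0
  have hrep : ∀ y : Fin m → ℝ, ψ y = ∑ i, y i * ψ (Pi.single i 1) := by
    intro y
    conv_lhs => rw [pi_eq_sum_univ' y]
    simp [map_sum]
  have hz : ∑ i, ψ (Pi.single i 1) • L i = 0 := by
    ext1 v
    have : ContinuousLinearMap.pi L v ∈ LinearMap.ker ψ := hψ ⟨v, rfl⟩
    rw [LinearMap.mem_ker, hrep] at this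
    simpa [mul_comm] using this
  have := Fintype.linearIndependent_iff.1 hL _ hz
  ext y
  simp [this]

theorem aux_regular {n m : ℕ} (H : (Fin n → ℝ) → (Fin m → ℝ)) (H' : (Fin n → ℝ) →L[ℝ] (Fin m → ℝ))
    (xs : Fin n → ℝ) (hH : HasStrictFDerivAt H H' xs) (hs : H'.range = ⊤) (h0 : H xs = 0) :
    ∃ K : ℝ, 0 ≤ K ∧ ∀ᶠ y in 𝓝 xs, ∃ x, H x = 0 ∧ ‖x - y‖ ≤ K * ‖H y‖ := by
  let N := H'.nonlinearRightInverseOfSurjective hs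
  have hN : 0 < N.nnnorm := H'.nonlinearRightInverseOfSurjective_nnnorm_pos hs
  set c : NNReal := N.nnnorm⁻¹ / 2 with hc
  have cpos : 0 < c := by simp [hc, hN]
  obtain ⟨s, hsn, hap⟩ := hH.approximates_deriv_on_nhds (Or.inr cpos)
  obtain ⟨δ, hδ, hball⟩ := Metric.mem_nhds_iff.1 hsn
  have hNr : (0:ℝ) < N.nnnorm := hN
  have hcr : ((N.nnnorm : ℝ)⁻¹ - c) = (2 * (N.nnnorm : ℝ))⁻¹ := by
    simp [hc]; ring
  refine ⟨2 * N.nnnorm, by positivity, ?_⟩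
  have hcont : Tendsto (fun y => 2 * (N.nnnorm : ℝ) * ‖H y‖) (𝓝 xs) (𝓝 0) := by
    have h1 : ContinuousAt (fun y => 2 * (N.nnnorm : ℝ) * ‖H y‖) xs :=
      continuousAt_const.mul hH.continuousAt.norm
    simpa [ContinuousAt, h0] using h1
  filter_upwards [hcont.eventually (gt_mem_nhds (half_pos hδ)), Metric.ball_mem_nhds xs (half_pos hδ)]
    with y hy1 hy2
  have hsub : Metric.closedBall y (2 * (N.nnnorm : ℝ) * ‖H y‖) ⊆ s := by
    refine subset_trans ?_ hball
    intro u hu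
    have h1 : dist u y ≤ _ := hu
    have h2 : dist y xs < _ := hy2
    have := dist_triangle u y xs
    rw [Metric.mem_ball]; linarith
  have := hap.surjOn_closedBall_of_nonlinearRightInverse N (by positivity) hsub
  rw [hcr] at this
  obtain ⟨x, hx, hx0⟩ := this (a := 0) (by
    rw [Metric.mem_closedBall, dist_zero_left]
    apply le_of_eq; field_simp)
  exact ⟨x, hx0, by simpa [dist_eq_norm] using hx⟩

theorem aux_alt {n m : ℕ} {κ : Type*} [Fintype κ] (L : Fin m → (Fin n → ℝ) →L[ℝ] ℝ) (b : Fin m → ℝ)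
    (l : κ → (Fin n → ℝ) →L[ℝ] ℝ) (c : κ → ℝ) (w0 : Fin n → ℝ) (hw0 : ∀ i, L i w0 + b i = 0)
    (hno : ¬ ∃ w, (∀ i, L i w + b i = 0) ∧ ∀ k, l k w + c k < 0) :
    ∃ (lam : Fin m → ℝ) (mu : κ → ℝ), (∀ k, 0 ≤ mu k) ∧ (∃ k, mu k ≠ 0) ∧
      (∑ k, mu k • l k + ∑ i, lam i • L i = 0) ∧ 0 ≤ ∑ k, mu k * c k + ∑ i, lam i * b i := by
  let A : Set (κ → ℝ) := {y | ∃ w, (∀ i, L i w + b i = 0) ∧ ∀ k, l k w + c k < y k}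
  have hAc : Convex ℝ A := by
    rintro y ⟨w, hw, hy⟩ y' ⟨w', hw', hy'⟩ p q hp hq hpq
    refine ⟨p • w + q • w', fun i => ?_, fun k => ?_⟩
    · have h1 := hw i; have h2 := hw' i
      simp
      linear_combination p * h1 + q * h2 - b i * hpq
    · have h1 := hy k; have h2 := hy' k
      simp
      have : p * l k w + q * l k w' + c k = p * (l k w + c k) + q * (l k w' + c k) := by
        linear_combination - c k * hpq
      rw [this]
      rcases hp.eq_or_lt with h | h
      · subst h
        have : q = 1 := by linarith
        subst this; linarith
      · have := mul_lt_mul_of_pos_left h1 h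
        have := mul_le_mul_of_nonneg_left h2.le hq
        linarith
  have hAo : IsOpen A := by
    have : A = ⋃ w ∈ {w | ∀ i, L i w + b i = 0}, ⋂ k, {y : κ → ℝ | l k w + c k < y k} := by
      ext y; simp [A]
    rw [this]
    refine isOpen_biUnion fun w _ => isOpen_iInter_of_finite fun k => ?_
    exact isOpen_lt continuous_const (continuous_apply k)
  have h0 : (0 : κ → ℝ) ∉ A := hno
  obtain ⟨ψ, hψ⟩ := geometric_hahn_banach_open_point hAc hAo h0
  simp only [map_zero] at hψ
  let mu : κ → ℝ := fun k => - ψ (Pi.single k 1)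
  have hrep : ∀ y : κ → ℝ, ψ y = - ∑ i, mu i * y i := by
    intro y
    conv_lhs => rw [← Finset.univ_sum_single y]
    rw [map_sum, ← Finset.sum_neg_distrib]
    refine Finset.sum_congr rfl fun i _ => ?_
    have : (Pi.single i (y i) : κ → ℝ) = y i • Pi.single i 1 := by
      rw [← Pi.single_smul]; simp
    rw [this]; simp [mu]; ring
  -- key inequality with slack
  have hkey : ∀ w, (∀ i, L i w + b i = 0) → ∀ s : κ → ℝ, (∀ k, 0 < s k) →
      0 < ∑ k, mu k * (l k w + c k + s k) := by
    intro w hw s hs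
    have := hψ (fun k => l k w + c k + s k) ⟨w, hw, fun k => by linarith [hs k]⟩
    rw [hrep] at this
    linarith
  have hge : ∀ w, (∀ i, L i w + b i = 0) → 0 ≤ ∑ k, mu k * (l k w + c k) := by
    intro w hw
    have ht : Tendsto (fun t : ℝ => ∑ k, mu k * (l k w + c k + t)) (𝓝[>] 0)
        (𝓝 (∑ k, mu k * (l k w + c k + 0))) := by
      refine Tendsto.mono_left (Continuous.tendsto ?_ 0) nhdsWithin_le_nhds
      fun_prop
    simp only [add_zero] at ht
    refine ge_of_tendsto ht ?_
    filter_upwards [self_mem_nhdsWithin] with t ht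
    exact (hkey w hw (fun _ => t) (fun _ => ht)).le
  have hmu : ∀ k, 0 ≤ mu k := by
    intro k
    by_contra hk
    push Not at hk
    set S := ∑ k, mu k * (l k w0 + c k + 1) with hS
    have hSpos : 0 < S := hkey w0 hw0 (fun _ => 1) (fun _ => one_pos)
    have := hkey w0 hw0 (fun j => 1 + (Pi.single k (S / (- mu k)) : κ → ℝ) j) (fun j => by
      have : 0 ≤ (Pi.single k (S / (- mu k)) : κ → ℝ) j := by
        rw [Pi.single_apply]; split_ifs
        · exact div_nonneg hSpos.le (by linarith)
        · exact le_rfl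
      linarith)
    have e : ∑ j, mu j * (l j w0 + c j + (1 + (Pi.single k (S / (- mu k)) : κ → ℝ) j)) = S + mu k * (S / (- mu k)) := by
      have e1 : ∑ j, mu j * (Pi.single k (S / (- mu k)) : κ → ℝ) j = mu k * (S / (- mu k)) := by
        rw [Fintype.sum_eq_single k (fun j hj => by simp [hj])]
        simp
      rw [← e1, hS, ← Finset.sum_add_distrib]
      exact Finset.sum_congr rfl fun j _ => by ring
    rw [e] at this
    have : mu k * (S / (- mu k)) = - S := by
      have := hk.ne
      field_simp
    linarith
  have hne : ∃ k, mu k ≠ 0 := by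
    by_contra hall
    push Not at hall
    have := hkey w0 hw0 (fun _ => 1) (fun _ => one_pos)
    simp [hall] at this
  have hlin : ∀ v, (∀ i, L i v = 0) → (∑ k, mu k • l k) v = 0 := by
    intro v hv
    have hall : ∀ t : ℝ, 0 ≤ ∑ k, mu k * (l k w0 + c k) + t * (∑ k, mu k • l k) v := by
      intro t
      have := hge (w0 + t • v) (fun i => by simp [hv i, hw0 i])
      refine this.trans (le_of_eq ?_)
      simp only [map_add, map_smul, smul_eq_mul, _root_.sum_apply,
        _root_.smul_apply, Finset.mul_sum]
      rw [← Finset.sum_add_distrib]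
      refine Finset.sum_congr rfl fun k _ => ?_
      ring
    by_contra hne0
    set C := ∑ k, mu k * (l k w0 + c k)
    set a := (∑ k, mu k • l k) v
    have := hall (-(C + 1) / a)
    rw [div_mul_cancel₀ _ hne0] at this
    linarith
  have hspan := mem_span_of_iInf_ker_le_ker (𝕜 := ℝ) (L := fun i => (L i : (Fin n → ℝ) →ₗ[ℝ] ℝ))
    (K := ((∑ k, mu k • l k : (Fin n → ℝ) →L[ℝ] ℝ) : (Fin n → ℝ) →ₗ[ℝ] ℝ)) (by
      intro v hv
      simp only [Submodule.mem_iInf, LinearMap.mem_ker] at hv ⊢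
      exact hlin v hv)
  obtain ⟨a, ha⟩ := (Submodule.mem_span_range_iff_exists_fun ℝ).1 hspan
  have ha' : ∀ v, (∑ k, mu k * l k v) = ∑ i, a i * L i v := by
    intro v
    have := LinearMap.congr_fun ha v
    simpa using this.symm
  refine ⟨fun i => - a i, mu, hmu, hne, ?_, ?_⟩
  · ext1 v
    simp [ha' v]
  · have h1 := hge w0 hw0
    simp only [mul_add, Finset.sum_add_distrib] at h1
    rw [ha' w0] at h1
    have : ∑ i, a i * L i w0 = ∑ i, - a i * b i :=
      Finset.sum_congr rfl fun i _ => by linear_combination a i * hw0 i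
    rw [this] at h1
    linarith

theorem aux_lin {n m p : ℕ} {G : Type*} [NormedAddCommGroup G] [NormedSpace ℝ G]
    (f : (Fin n → ℝ) → G) (h : Fin m → (Fin n → ℝ) → G) (g : Fin p → (Fin n → ℝ) → G)
    (hf : Differentiable ℝ f) (hh : ∀ i, Differentiable ℝ (h i)) (hg : ∀ j, Differentiable ℝ (g j))
    (lam : Fin m → ℝ) (mu : Fin p → ℝ) (x : Fin n → ℝ) :
    fderiv ℝ (fun x => f x + ∑ i, lam i • h i x + ∑ j, mu j • g j x) x =
      fderiv ℝ f x + ∑ i, lam i • fderiv ℝ (h i) x + ∑ j, mu j • fderiv ℝ (g j) x := by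
  refine HasFDerivAt.fderiv ?_
  refine ((hf x).hasFDerivAt.add (HasFDerivAt.fun_sum fun i _ => ?_)).add
    (HasFDerivAt.fun_sum fun j _ => ?_)
  · exact (hh i x).hasFDerivAt.const_smul (lam i)
  · exact (hg j x).hasFDerivAt.const_smul (mu j)

theorem aux_sum {p : ℕ} {G : Type*} [AddCommGroup G] [Module ℝ G] (P : Fin p → Prop)
    [DecidablePred P] [Fintype {j // P j}] (a : {j // P j} → ℝ) (v : Fin p → G) :
    ∑ j, (if hj : P j then a ⟨j, hj⟩ else 0) • v j = ∑ k : {j // P j}, a k • v k := by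
  have h1 : ∑ j ∈ Finset.univ.filter P, (if hj : P j then a ⟨j, hj⟩ else 0) • v j
      = ∑ j, (if hj : P j then a ⟨j, hj⟩ else 0) • v j := by
    refine Finset.sum_filter_of_ne fun j _ hne => ?_
    by_contra hj
    simp [hj] at hne
  rw [← h1, Finset.sum_subtype (Finset.univ.filter P) (p := P) (by simp)]
  refine Finset.sum_congr rfl fun k _ => ?_
  simp [k.2]

/-- Little-o sign lemma. -/
theorem aux_neg (F : ℝ → ℝ) (a c : ℝ) (ha : a < 0 ∨ (a = 0 ∧ c < 0))
    (hF : (fun t : ℝ => F t - t * a - t ^ 2 / 2 * c) =o[𝓝[>] 0] (fun t : ℝ => t ^ 2)) :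
    ∀ᶠ t in 𝓝[>] (0:ℝ), F t < 0 := by
  rcases ha with ha | ⟨ha, hc⟩
  · have h1 := hF.def one_pos
    have hlim : Tendsto (fun t : ℝ => a + t * (|c| + 1)) (𝓝[>] 0) (𝓝 (a + 0 * (|c| + 1))) := by
      refine Tendsto.mono_left (Continuous.tendsto ?_ 0) nhdsWithin_le_nhds
      fun_prop
    have h2 := hlim.eventually (gt_mem_nhds (by simpa using ha : a + 0 * (|c| + 1) < 0))
    filter_upwards [h1, h2, self_mem_nhdsWithin] with t h1 h2 ht
    have ht : 0 < t := ht
    rw [Real.norm_of_nonneg (sq_nonneg t), one_mul] at h1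
    have h3 := (abs_le.1 h1).2
    have h4 : t ^ 2 / 2 * c ≤ t ^ 2 * |c| := by
      have := mul_le_mul_of_nonneg_left (le_abs_self c) (by positivity : 0 ≤ t ^ 2 / 2)
      nlinarith [abs_nonneg c, sq_nonneg t, mul_nonneg (abs_nonneg c) (sq_nonneg t)]
    have h5 := mul_neg_of_pos_of_neg ht h2
    nlinarith
  · have h1 := hF.def (show 0 < -c / 4 by linarith)
    filter_upwards [h1, self_mem_nhdsWithin] with t h1 ht
    have ht : 0 < t := ht
    rw [Real.norm_of_nonneg (sq_nonneg t)] at h1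
    have h3 := (abs_le.1 h1).2
    have h4 : t ^ 2 * c < 0 := mul_neg_of_pos_of_neg (by positivity) hc
    rw [ha] at h3
    nlinarith

theorem aux_primal {n m p : ℕ} (f : (Fin n → ℝ) → ℝ) (h : Fin m → (Fin n → ℝ) → ℝ)
    (g : Fin p → (Fin n → ℝ) → ℝ)
    (hf : ContDiff ℝ 2 f) (hh : ∀ i, ContDiff ℝ 2 (h i)) (hg : ∀ j, ContDiff ℝ 2 (g j))
    (xs : Fin n → ℝ) (hfeas : Feas h g xs)
    (hmin : IsLocalMinOn f {x | Feas h g x} xs)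
    (hli : LinearIndependent ℝ (fun i : Fin m => fderiv ℝ (h i) xs))
    (d : Fin n → ℝ) (hd : critCone f h g xs d) (w : Fin n → ℝ)
    (hwh : ∀ i, fderiv ℝ (h i) xs w + fderiv ℝ (fderiv ℝ (h i)) xs d d = 0)
    (hwg : ∀ j, g j xs = 0 → fderiv ℝ (g j) xs d = 0 →
      fderiv ℝ (g j) xs w + fderiv ℝ (fderiv ℝ (g j)) xs d d < 0)
    (hwf : fderiv ℝ f xs w + fderiv ℝ (fderiv ℝ f) xs d d < 0) : False := by
  let H : (Fin n → ℝ) → (Fin m → ℝ) := fun x i => h i x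
  have hH : HasStrictFDerivAt H (ContinuousLinearMap.pi fun i => fderiv ℝ (h i) xs) xs :=
    hasStrictFDerivAt_pi.2 fun i => (hh i).contDiffAt.hasStrictFDerivAt (by norm_num)
  obtain ⟨K, hK, hreg⟩ := aux_regular H _ xs hH (aux_surj _ hli) (funext hfeas.1)
  let y : ℝ → Fin n → ℝ := fun t => xs + (t • d + (t ^ 2 / 2) • w + 0)
  have hy0 : Tendsto y (𝓝[>] 0) (𝓝 xs) := by
    have : Tendsto y (𝓝 0) (𝓝 (y 0)) := by
      refine Continuous.tendsto ?_ 0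
      fun_prop
    have e : y 0 = xs := by simp [y]
    rw [e] at this
    exact this.mono_left nhdsWithin_le_nhds
  have hHy : (fun t => H (y t)) =o[𝓝[>] 0] (fun t : ℝ => t ^ 2) := by
    refine isLittleO_pi.2 fun i => ?_
    have := aux_curve (h i) (hh i) xs d w (fun _ => 0) (isLittleO_zero _ _)
    simpa only [hwh i, hfeas.1 i, hd.2.1 i, mul_zero, sub_zero] using this
  have hex : ∀ t, ∃ x, (∃ x, H x = 0 ∧ ‖x - y t‖ ≤ K * ‖H (y t)‖) →
      (H x = 0 ∧ ‖x - y t‖ ≤ K * ‖H (y t)‖) := by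
    intro t
    by_cases hx : ∃ x, H x = 0 ∧ ‖x - y t‖ ≤ K * ‖H (y t)‖
    · obtain ⟨x, hx⟩ := hx
      exact ⟨x, fun _ => hx⟩
    · exact ⟨0, fun hx' => absurd hx' hx⟩
  choose X hX using hex
  have hXev : ∀ᶠ t in 𝓝[>] (0:ℝ), H (X t) = 0 ∧ ‖X t - y t‖ ≤ K * ‖H (y t)‖ :=
    (hy0.eventually hreg).mono fun t ht => hX t ht
  have he : (fun t => X t - y t) =o[𝓝[>] 0] (fun t : ℝ => t ^ 2) := by
    refine IsBigO.trans_isLittleO ?_ hHy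
    exact IsBigO.of_bound K (hXev.mono fun t ht => ht.2)
  have hXe : ∀ t, xs + (t • d + (t ^ 2 / 2) • w + (X t - y t)) = X t := by
    intro t; simp only [y]; abel
  have hsq : Tendsto (fun t : ℝ => t ^ 2) (𝓝[>] 0) (𝓝 0) := by
    have : Tendsto (fun t : ℝ => t ^ 2) (𝓝 0) (𝓝 (0 ^ 2)) := Continuous.tendsto (by fun_prop) 0
    simp only [ne_eq, OfNat.ofNat_ne_zero, not_false_eq_true, zero_pow] at this
    exact this.mono_left nhdsWithin_le_nhds
  have hX0 : Tendsto X (𝓝[>] 0) (𝓝 xs) := by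
    have := (he.trans_tendsto hsq).add hy0
    simpa using this
  have hcur : ∀ φ : (Fin n → ℝ) → ℝ, ContDiff ℝ 2 φ → (fderiv ℝ φ xs d < 0 ∨ (fderiv ℝ φ xs d = 0 ∧
      fderiv ℝ φ xs w + fderiv ℝ (fderiv ℝ φ) xs d d < 0)) →
      ∀ᶠ t in 𝓝[>] (0:ℝ), φ (X t) - φ xs < 0 := by
    intro φ hφ hc
    have := aux_curve φ hφ xs d w (fun t => X t - y t) he
    simp only [hXe] at this
    exact aux_neg _ _ _ hc this
  have hgev : ∀ᶠ t in 𝓝[>] (0:ℝ), ∀ j, g j (X t) ≤ 0 := by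
    refine eventually_all.2 fun j => ?_
    rcases (hfeas.2 j).lt_or_eq with hj | hj
    · have := ((hg j).continuous.tendsto xs).comp hX0
      exact (this.eventually (gt_mem_nhds hj)).mono fun t ht => ht.le
    · have hc : fderiv ℝ (g j) xs d < 0 ∨ (fderiv ℝ (g j) xs d = 0 ∧
          fderiv ℝ (g j) xs w + fderiv ℝ (fderiv ℝ (g j)) xs d d < 0) := by
        rcases (hd.2.2 j hj).lt_or_eq with h1 | h1
        · exact Or.inl h1
        · exact Or.inr ⟨h1, hwg j hj h1⟩
      filter_upwards [hcur (g j) (hg j) hc] with t ht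
      rw [hj] at ht
      linarith
  have hfev := hcur f hf (Or.inr ⟨hd.1, hwf⟩)
  have hmin' : ∀ᶠ x in 𝓝 xs, x ∈ {x | Feas h g x} → f xs ≤ f x := eventually_nhdsWithin_iff.1 hmin
  obtain ⟨t, h1, h2, h3, h4⟩ := ((hX0.eventually hmin').and (hXev.and (hgev.and hfev))).exists
  have := h1 ⟨fun i => congrFun h2.1 i, h3⟩
  linarith

/-- Under MFCQ, at a local minimizer, for each critical direction there is a
Lagrange multiplier (depending on the direction) making the Hessian quadratic form nonnegative. -/
theorem stmt0 {n m p : ℕ} (f : (Fin n → ℝ) → ℝ) (h : Fin m → (Fin n → ℝ) → ℝ)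
    (g : Fin p → (Fin n → ℝ) → ℝ)
    (hf : ContDiff ℝ 2 f) (hh : ∀ i, ContDiff ℝ 2 (h i)) (hg : ∀ j, ContDiff ℝ 2 (g j))
    (xs : Fin n → ℝ) (hfeas : Feas h g xs)
    (hmin : IsLocalMinOn f {x | Feas h g x} xs)
    (hmfcq : MFCQ h g xs) :
    ∀ d : Fin n → ℝ, critCone f h g xs d →
      ∃ (lam : Fin m → ℝ) (mu : Fin p → ℝ), IsLagMult f h g xs lam mu ∧
        0 ≤ hessQ (Lagr f h g lam mu) xs d := by
  intro d hd
  obtain ⟨hli, dm, hdm1, hdm2⟩ := hmfcq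
  let P : Fin p → Prop := fun j => g j xs = 0 ∧ fderiv ℝ (g j) xs d = 0
  have hw0 : ∃ w0, ∀ i, fderiv ℝ (h i) xs w0 + fderiv ℝ (fderiv ℝ (h i)) xs d d = 0 := by
    have hs := aux_surj _ hli
    obtain ⟨w0, hw0⟩ := LinearMap.range_eq_top.1 hs
      (fun i => - fderiv ℝ (fderiv ℝ (h i)) xs d d)
    refine ⟨w0, fun i => ?_⟩
    have : fderiv ℝ (h i) xs w0 = - fderiv ℝ (fderiv ℝ (h i)) xs d d := congrFun hw0 i
    linarith
  obtain ⟨w0, hw0⟩ := hw0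
  obtain ⟨lam, mu, hmu, ⟨k0, hk0⟩, hstat, hsec⟩ := aux_alt (κ := Option {j // P j})
    (fun i => fderiv ℝ (h i) xs) (fun i => fderiv ℝ (fderiv ℝ (h i)) xs d d)
    (fun k => k.elim (fderiv ℝ f xs) (fun j => fderiv ℝ (g j) xs))
    (fun k => k.elim (fderiv ℝ (fderiv ℝ f) xs d d) (fun j => fderiv ℝ (fderiv ℝ (g j)) xs d d))
    w0 hw0 (by
      rintro ⟨w, hw1, hw2⟩
      exact aux_primal f h g hf hh hg xs hfeas hmin hli d hd w hw1
        (fun j hj1 hj2 => hw2 (some ⟨j, hj1, hj2⟩)) (hw2 none))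
  simp only [Fintype.sum_option, Option.elim] at hstat hsec
  have hmu0 : mu none ≠ 0 := by
    intro h0
    have h1 := congrArg (fun T : (Fin n → ℝ) →L[ℝ] ℝ => T dm) hstat
    simp [h0, hdm1] at h1
    have hle : ∀ k : {j // P j}, 0 ≤ - (mu (some k) * fderiv ℝ (g k) xs dm) := fun k => by
      have := mul_nonneg (hmu (some k)) (neg_nonneg.2 (hdm2 k k.2.1).le)
      linarith
    have h2 : ∑ k : {j // P j}, - (mu (some k) * fderiv ℝ (g k) xs dm) = 0 := by
      rw [Finset.sum_neg_distrib, h1, neg_zero]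
    have h3 := (Finset.sum_eq_zero_iff_of_nonneg (fun k _ => hle k)).1 h2
    cases k0 with
    | none => exact hk0 h0
    | some k =>
      have h4 := h3 k (Finset.mem_univ _)
      rw [neg_eq_zero] at h4
      rcases mul_eq_zero.1 h4 with h5 | h5
      · exact hk0 h5
      · exact absurd h5 (hdm2 k k.2.1).ne
  have hpos : 0 < mu none := lt_of_le_of_ne (hmu none) (Ne.symm hmu0)
  set s := (mu none)⁻¹ with hs
  have hspos : 0 < s := inv_pos.2 hpos
  have hs1 : s * mu none = 1 := inv_mul_cancel₀ hmu0
  let lam' : Fin m → ℝ := fun i => s * lam i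
  let mu' : Fin p → ℝ := fun j => if hj : P j then s * mu (some ⟨j, hj⟩) else 0
  have hdf : Differentiable ℝ f := hf.differentiable (by norm_num)
  have hdh : ∀ i, Differentiable ℝ (h i) := fun i => (hh i).differentiable (by norm_num)
  have hdg : ∀ i, Differentiable ℝ (g i) := fun i => (hg i).differentiable (by norm_num)
  have h2d : ∀ φ : (Fin n → ℝ) → ℝ, ContDiff ℝ 2 φ → Differentiable ℝ (fderiv ℝ φ) :=
    fun φ hφ => (hφ.fderiv_right (m := 1) (by norm_num)).differentiable (by norm_num)
  have hL1 : fderiv ℝ (Lagr f h g lam' mu') = fun x =>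
      fderiv ℝ f x + ∑ i, lam' i • fderiv ℝ (h i) x + ∑ j, mu' j • fderiv ℝ (g j) x :=
    funext fun x => aux_lin f h g hdf hdh hdg lam' mu' x
  have hL2 : fderiv ℝ (fderiv ℝ (Lagr f h g lam' mu')) xs =
      fderiv ℝ (fderiv ℝ f) xs + ∑ i, lam' i • fderiv ℝ (fderiv ℝ (h i)) xs
        + ∑ j, mu' j • fderiv ℝ (fderiv ℝ (g j)) xs := by
    rw [hL1]
    exact aux_lin _ _ _ (h2d f hf) (fun i => h2d _ (hh i)) (fun j => h2d _ (hg j)) lam' mu' xs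
  refine ⟨lam', mu', ⟨fun j => ?_, ?_, fun j => ?_⟩, ?_⟩
  · by_cases hj : P j
    · simpa [mu', hj] using mul_nonneg hspos.le (hmu (some ⟨j, hj⟩))
    · simp [mu', hj]
  · rw [hL1]
    have h1 : ∑ j, mu' j • fderiv ℝ (g j) xs = ∑ k : {j // P j}, (s * mu (some k)) • fderiv ℝ (g k) xs :=
      aux_sum P (fun k => s * mu (some k)) (fun j => fderiv ℝ (g j) xs)
    have h2 := congrArg (fun T : (Fin n → ℝ) →L[ℝ] ℝ => s • T) hstat
    simp only [smul_add, Finset.smul_sum, smul_smul, hs1, one_smul, smul_zero] at h2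
    simp only [h1]
    rw [← h2]
    abel
  · by_cases hj : P j
    · rw [hj.1, mul_zero]
    · simp [mu', hj]
  · unfold hessQ
    rw [iteratedFDeriv_two_apply, hL2]
    have h1 : ∑ j, mu' j * fderiv ℝ (fderiv ℝ (g j)) xs d d =
        ∑ k : {j // P j}, s * mu (some k) * fderiv ℝ (fderiv ℝ (g k)) xs d d :=
      aux_sum P (fun k => s * mu (some k)) (fun j => fderiv ℝ (fderiv ℝ (g j)) xs d d)
    have h2 := mul_nonneg hspos.le hsec
    simp only [mul_add, Finset.mul_sum, ← mul_assoc, hs1, one_mul] at h2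
    rw [← h1] at h2
    have h3 : (fderiv ℝ (fderiv ℝ f) xs + ∑ i, lam' i • fderiv ℝ (fderiv ℝ (h i)) xs
        + ∑ j, mu' j • fderiv ℝ (fderiv ℝ (g j)) xs) d d = fderiv ℝ (fderiv ℝ f) xs d d
        + ∑ i, lam' i * fderiv ℝ (fderiv ℝ (h i)) xs d d
        + ∑ j, mu' j * fderiv ℝ (fderiv ℝ (g j)) xs d d := by
      simp [_root_.sum_apply]
    have h4 : (0 : ℝ) ≤ fderiv ℝ (fderiv ℝ f) xs d d
        + ∑ i, lam' i * fderiv ℝ (fderiv ℝ (h i)) xs d d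
        + ∑ j, mu' j * fderiv ℝ (fderiv ℝ (g j)) xs d d := by
      simp only [lam']
      linarith
    rw [← h3] at h4
    exact h4
end
end

section
/- Let x* be a local minimizer of (NLP). Then for every direction d in the critical cone C(x*) there exists a Fritz John multiplier (λ₀,λ,μ) ∈ Λ₀(x*) (depending on d) such that dᵀ∇²ₓₓL^g(x*,λ₀,λ,μ)d ≥ 0. -/
open scoped BigOperators Pointwise
open Matrix

attribute [local instance] Classical.propDecidable

noncomputable section

/-- The generalized Lagrangian of (NLP). -/
def LagrG {n m p : ℕ} (f : (Fin n → ℝ) → ℝ) (h : Fin m → (Fin n → ℝ) → ℝ)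
    (g : Fin p → (Fin n → ℝ) → ℝ) (l0 : ℝ) (lam : Fin m → ℝ) (mu : Fin p → ℝ)
    (x : Fin n → ℝ) : ℝ :=
  l0 * f x + ∑ i, lam i * h i x + ∑ j, mu j * g j x

/-- `(l0, lam, mu)` is a Fritz John (generalized Lagrange) multiplier at `xs`. -/
def IsFJMult {n m p : ℕ} (f : (Fin n → ℝ) → ℝ) (h : Fin m → (Fin n → ℝ) → ℝ)
    (g : Fin p → (Fin n → ℝ) → ℝ) (xs : Fin n → ℝ) (l0 : ℝ) (lam : Fin m → ℝ)
    (mu : Fin p → ℝ) : Prop :=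
  0 ≤ l0 ∧ (∀ j, 0 ≤ mu j) ∧ fderiv ℝ (LagrG f h g l0 lam mu) xs = 0 ∧
    (∀ j, mu j * g j xs = 0) ∧ (l0, lam, mu) ≠ (0, 0, 0)


section helpers
open Filter Topology Asymptotics

variable {E : Type*} [NormedAddCommGroup E] [NormedSpace ℝ E]

lemma aux_taylor_line {φ : E → ℝ} (hφ : ContDiff ℝ 2 φ) (x d : E) :
    (fun t : ℝ => φ (x + t • d) - φ x - t * fderiv ℝ φ x d
      - t ^ 2 / 2 * fderiv ℝ (fderiv ℝ φ) x d d) =o[𝓝 0] fun t : ℝ => t ^ 2 := by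
  have hline : ∀ t : ℝ, HasDerivAt (fun t : ℝ => x + t • d) d t := fun t => by
    simpa using ((hasDerivAt_id t).smul_const d).const_add x
  have h1 : ∀ t : ℝ, HasDerivAt (fun t : ℝ => φ (x + t • d)) (fderiv ℝ φ (x + t • d) d) t :=
    fun t => ((hφ.differentiable (by simp)) _).hasFDerivAt.comp_hasDerivAt t (hline t)
  have hφ' : ContDiff ℝ 1 (fderiv ℝ φ) := hφ.fderiv_right (by norm_num)
  have h2 : HasDerivAt (fun t : ℝ => fderiv ℝ φ (x + t • d) d)
      (fderiv ℝ (fderiv ℝ φ) x d d) 0 := by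
    have : HasFDerivAt (fderiv ℝ φ) (fderiv ℝ (fderiv ℝ φ) x) (x + (0 : ℝ) • d) := by
      simpa using ((hφ'.differentiable (by simp)) x).hasFDerivAt
    have h3 := this.comp_hasDerivAt (0 : ℝ) (hline 0)
    simpa using h3.clm_apply (hasDerivAt_const (0 : ℝ) d)
  have h4 := h2.isLittleO
  simp only [zero_smul, add_zero, sub_zero, smul_eq_mul] at h4
  have h5 := Convex.isLittleO_pow_succ_real (s := Set.univ) (x₀ := (0 : ℝ)) (n := 1)
    (f := fun t : ℝ => φ (x + t • d) - φ x - t * fderiv ℝ φ x d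
      - t ^ 2 / 2 * fderiv ℝ (fderiv ℝ φ) x d d)
    (f' := fun t : ℝ => fderiv ℝ φ (x + t • d) d - fderiv ℝ φ x d
      - t * fderiv ℝ (fderiv ℝ φ) x d d) convex_univ (Set.mem_univ _) ?_ (by simpa using h4)
  · simpa using h5
  · intro t _
    refine HasDerivAt.hasDerivWithinAt ?_
    refine (((h1 t).sub_const (φ x)).sub ?_).sub ?_
    · simpa using (hasDerivAt_id t).mul_const (fderiv ℝ φ x d)
    · refine (((hasDerivAt_pow 2 t).div_const 2).mul_const
        (fderiv ℝ (fderiv ℝ φ) x d d)).congr_deriv ?_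
      norm_num

lemma aux_taylor_curve {φ : E → ℝ} (hφ : ContDiff ℝ 2 φ) (x d z : E) (r : ℝ → E)
    (hr : r =o[𝓝[>] 0] fun t : ℝ => t ^ 2) :
    (fun t : ℝ => φ (x + t • d + ((t ^ 2 / 2) • z + r t)) - φ x - t * fderiv ℝ φ x d
      - t ^ 2 / 2 * (fderiv ℝ φ x z + fderiv ℝ (fderiv ℝ φ) x d d))
      =o[𝓝[>] 0] fun t : ℝ => t ^ 2 := by
  have h1 := (aux_taylor_line hφ x d).mono (nhdsWithin_le_nhds (s := Set.Ioi (0 : ℝ)))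
  have hs : HasStrictFDerivAt φ (fderiv ℝ φ x) x := hφ.contDiffAt.hasStrictFDerivAt (by simp)
  have hw : (fun t : ℝ => (t ^ 2 / 2) • z + r t) =O[𝓝[>] 0] fun t : ℝ => t ^ 2 := by
    refine IsBigO.add ?_ hr.isBigO
    refine IsBigO.of_bound (‖z‖ / 2) (Eventually.of_forall fun t => ?_)
    rw [norm_smul]; simp; apply le_of_eq; ring
  have hsq : Tendsto (fun t : ℝ => t ^ 2) (𝓝[>] 0) (𝓝 0) := by
    have : Tendsto (fun t : ℝ => t ^ 2) (𝓝 0) (𝓝 (0 ^ 2)) := (continuous_pow 2).tendsto 0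
    simpa using this.mono_left nhdsWithin_le_nhds
  have hw0 := hw.trans_tendsto hsq
  have hl : Tendsto (fun t : ℝ => x + t • d) (𝓝[>] 0) (𝓝 x) := by
    have : Tendsto (fun t : ℝ => x + t • d) (𝓝 0) (𝓝 (x + (0 : ℝ) • d)) :=
      Continuous.tendsto (by fun_prop) 0
    simpa using this.mono_left nhdsWithin_le_nhds
  have hl2 : Tendsto (fun t : ℝ => x + t • d + ((t ^ 2 / 2) • z + r t)) (𝓝[>] 0) (𝓝 x) := by
    simpa using hl.add hw0
  have h2 := hs.isLittleO.comp_tendsto (hl2.prodMk_nhds hl)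
  have h3 : (fun t : ℝ => φ (x + t • d + ((t ^ 2 / 2) • z + r t)) - φ (x + t • d)
      - fderiv ℝ φ x ((t ^ 2 / 2) • z + r t)) =o[𝓝[>] 0] fun t : ℝ => t ^ 2 := by
    refine IsLittleO.trans_isBigO (g := fun t : ℝ => (t ^ 2 / 2) • z + r t) ?_ hw
    simpa [Function.comp_def] using h2
  have h4 : (fun t : ℝ => fderiv ℝ φ x (r t)) =o[𝓝[>] 0] fun t : ℝ => t ^ 2 :=
    ((fderiv ℝ φ x).isBigO_comp r _).trans_isLittleO hr
  refine ((h1.add h3).add h4).congr_left fun t => ?_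
  simp only [map_add, map_smul, smul_eq_mul]
  ring

/-- Negative leading term of a second order expansion. -/
lemma aux_neg_s1 {ψ : ℝ → ℝ} {c q : ℝ} (hc : c ≤ 0) (hq : c = 0 → q < 0)
    (h : (fun t : ℝ => ψ t - t * c - t ^ 2 / 2 * q) =o[𝓝[>] 0] fun t : ℝ => t ^ 2) :
    ∀ᶠ t in 𝓝[>] 0, ψ t < 0 := by
  rcases hc.lt_or_eq with hc | hc
  · have h1 := h.def one_pos
    have hpos : (0 : ℝ) < -c / (|q| + 2) := by
      apply div_pos <;> [linarith; positivity]
    filter_upwards [h1, Ioo_mem_nhdsGT hpos] with t ht ht2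
    have h2 := (abs_le.1 (by simpa using ht : |ψ t - t * c - t ^ 2 / 2 * q| ≤ t ^ 2)).2
    have h3 : t * (|q| + 2) < -c := by
      have := ht2.2; rwa [lt_div_iff₀ (by positivity)] at this
    have h4 := ht2.1
    have h5 : t ^ 2 * q ≤ t ^ 2 * |q| := mul_le_mul_of_nonneg_left (le_abs_self q) (sq_nonneg t)
    have h6 : t * (t * (|q| + 2)) < t * (-c) := mul_lt_mul_of_pos_left h3 h4
    nlinarith [mul_nonneg (sq_nonneg t) (abs_nonneg q)]
  · have hq := hq hc
    have h1 := h.def (c := -q / 4) (by linarith)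
    filter_upwards [h1, self_mem_nhdsWithin] with t ht ht0
    have ht0 : 0 < t := ht0
    have h2 := (abs_le.1 (by simpa using ht :
      |ψ t - t * c - t ^ 2 / 2 * q| ≤ -q / 4 * t ^ 2)).2
    rw [hc] at h2
    nlinarith [mul_pos (pow_pos ht0 2) (neg_pos.2 hq)]

/-- Correction of an approximate solution curve. -/
lemma aux_correct {F : Type*} [NormedAddCommGroup F] [NormedSpace ℝ F] [CompleteSpace E]
    [CompleteSpace F] {H : E → F} {H' : E →L[ℝ] F} {x : E} (hH : HasStrictFDerivAt H H' x)
    (hs : H'.range = ⊤) (w : ℝ → E) (hw : Tendsto w (𝓝[>] 0) (𝓝 x))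
    (ho : (fun t => H (w t)) =o[𝓝[>] 0] fun t : ℝ => t ^ 2) :
    ∃ r : ℝ → E, r =o[𝓝[>] 0] (fun t : ℝ => t ^ 2) ∧ ∀ᶠ t in 𝓝[>] 0, H (w t + r t) = 0 := by
  obtain ⟨R, hR⟩ := H'.exists_nonlinearRightInverse_of_surjective hs
  have hR' : (0 : ℝ) < R.nnnorm := hR
  obtain ⟨s, hs, ha⟩ := hH.approximates_deriv_on_nhds (c := R.nnnorm⁻¹ / 2)
    (Or.inr (by positivity))
  obtain ⟨δ, hδ, hball⟩ := Metric.mem_nhds_iff.1 hs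
  have hsq : Tendsto (fun t : ℝ => t ^ 2) (𝓝[>] 0) (𝓝 0) := by
    have : Tendsto (fun t : ℝ => t ^ 2) (𝓝 0) (𝓝 (0 ^ 2)) := (continuous_pow 2).tendsto 0
    simpa using this.mono_left nhdsWithin_le_nhds
  have hH0 := (ho.isBigO.trans_tendsto hsq).norm.const_mul (2 * (R.nnnorm : ℝ))
  simp only [norm_zero, mul_zero] at hH0
  have key : ∀ᶠ t in 𝓝[>] (0 : ℝ), ∃ v : E,
      ‖v‖ ≤ 2 * R.nnnorm * ‖H (w t)‖ ∧ H (w t + v) = 0 := by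
    filter_upwards [hw.eventually (Metric.ball_mem_nhds x (half_pos hδ)),
      hH0.eventually (gt_mem_nhds (half_pos hδ))] with t h1 h2
    have hsurj := ha.surjOn_closedBall_of_nonlinearRightInverse R (b := w t)
      (ε := 2 * R.nnnorm * ‖H (w t)‖) (by positivity) (fun y hy => hball (by
        rw [Metric.mem_ball] at *
        rw [Metric.mem_closedBall] at hy
        linarith [dist_triangle y (w t) x]))
    have h0 : (0 : F) ∈ Metric.closedBall (H (w t))
        (((R.nnnorm : ℝ)⁻¹ - ((R.nnnorm⁻¹ / 2 : NNReal) : ℝ)) * (2 * R.nnnorm * ‖H (w t)‖)) := by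
      rw [Metric.mem_closedBall, dist_zero_left]
      push_cast
      apply le_of_eq
      field_simp
      ring
    obtain ⟨y, hy, hy0⟩ := hsurj h0
    refine ⟨y - w t, ?_, by simpa using hy0⟩
    rwa [Metric.mem_closedBall, dist_eq_norm] at hy
  refine ⟨fun t => if ht : ∃ v : E, ‖v‖ ≤ 2 * R.nnnorm * ‖H (w t)‖ ∧ H (w t + v) = 0
    then ht.choose else 0, ?_, ?_⟩
  · refine IsBigO.trans_isLittleO ?_ ho
    refine IsBigO.of_bound (2 * R.nnnorm) ?_
    filter_upwards [key] with t ht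
    rw [dif_pos ht]
    exact ht.choose_spec.1
  · filter_upwards [key] with t ht
    rw [dif_pos ht]
    exact ht.choose_spec.2

/-- If the linear system is not surjective there is a nontrivial dependency. -/
lemma aux_dep {I : Type*} [Fintype I] (c : I → E →L[ℝ] ℝ)
    (hc : (ContinuousLinearMap.pi c).range ≠ ⊤) :
    ∃ lam : I → ℝ, lam ≠ 0 ∧ ∑ i, lam i • c i = 0 := by
  obtain ⟨F, hF0, hF⟩ := Submodule.exists_le_ker_of_lt_top _ (lt_top_iff_ne_top.2 hc)
  have hFv : ∀ v : I → ℝ, F v = ∑ i, F (Pi.single i 1) * v i := fun v => by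
    rw [LinearMap.pi_apply_eq_sum_univ F v]
    refine Finset.sum_congr rfl fun i _ => ?_
    rw [smul_eq_mul, mul_comm]
    congr 2
    ext j; simp [Pi.single_apply, eq_comm]
  refine ⟨fun i => F (Pi.single i 1), ?_, ?_⟩
  · intro h
    apply hF0
    have h' : ∀ i, F (Pi.single i 1) = 0 := fun i => congrFun h i
    refine LinearMap.ext fun v => ?_
    rw [hFv]
    simp [h']
  · ext z
    have h1 : F (ContinuousLinearMap.pi c z) = 0 := hF ⟨z, rfl⟩
    rw [hFv] at h1
    simpa using h1

lemma aux_nonneg_of_forall {a b : ℝ} (h : ∀ s : ℝ, 0 ≤ s → 0 ≤ s * a + b) : 0 ≤ a := by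
  by_contra! ha
  have := h ((|b| + 1) / -a) (div_nonneg (by positivity) (by linarith))
  have h2 : (|b| + 1) / -a * a = -(|b| + 1) := by
    rw [div_neg, neg_mul, div_mul_cancel₀ _ ha.ne]
  linarith [le_abs_self b]

lemma aux_motzkin {K I : Type*} [Fintype K] [Fintype I] [CompleteSpace E]
    (a : K → E →L[ℝ] ℝ) (b : K → ℝ) (P : K → Prop)
    (c : I → E →L[ℝ] ℝ) (e : I → ℝ) (hc : (ContinuousLinearMap.pi c).range = ⊤)
    (hno : ¬ ∃ z, (∀ k, P k → a k z + b k < 0) ∧ ∀ i, c i z + e i = 0) :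
    ∃ (y : K → ℝ) (lam : I → ℝ), (∀ k, 0 ≤ y k) ∧ (∀ k, ¬ P k → y k = 0) ∧
      ¬ (y = 0 ∧ lam = 0) ∧ ∑ k, y k • a k + ∑ i, lam i • c i = 0 ∧
      0 ≤ ∑ k, y k * b k + ∑ i, lam i * e i := by
  set C := ContinuousLinearMap.pi c with hC
  have hCs : Function.Surjective C := LinearMap.range_eq_top.1 hc
  let T : Set (E × (K → ℝ)) := {q | ∀ k, P k → a k q.1 + b k < q.2 k}
  let Φ : E × (K → ℝ) → (K → ℝ) × (I → ℝ) := fun q => (q.2, C q.1 + e)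
  have hTo : IsOpen T := by
    have : T = ⋂ k, {q : E × (K → ℝ) | P k → a k q.1 + b k < q.2 k} := by
      ext q; simp [T]
    rw [this]
    refine isOpen_iInter_of_finite fun k => ?_
    by_cases hk : P k
    · simp only [hk, true_imp_iff]
      exact isOpen_lt (by fun_prop) (by fun_prop)
    · simp [hk]
  have hΦo : IsOpenMap Φ := by
    have h1 : IsOpenMap (fun z : E => C z + e) :=
      (Homeomorph.addRight e).isOpenMap.comp (C.isOpenMap hCs)
    exact (IsOpenMap.id.prodMap h1).comp (Homeomorph.prodComm E (K → ℝ)).isOpenMap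
  have hSo : IsOpen (Φ '' T) := hΦo _ hTo
  have hSc : Convex ℝ (Φ '' T) := by
    rintro _ ⟨q, hq, rfl⟩ _ ⟨q', hq', rfl⟩ s s' hs hs' hss
    refine ⟨s • q + s' • q', fun k hk => ?_, ?_⟩
    · have h1 := hq k hk
      have h2 := hq' k hk
      simp only [Prod.fst_add, Prod.smul_fst, Prod.snd_add, Prod.smul_snd, map_add, map_smul,
        Pi.add_apply, Pi.smul_apply, smul_eq_mul]
      have h3 : b k = s * b k + s' * b k := by rw [← add_mul, hss, one_mul]
      rcases hs.eq_or_lt with h0 | h0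
      · have : s' = 1 := by linarith
        subst this; rw [← h0]; linarith
      · have := mul_lt_mul_of_pos_left h1 h0
        have := mul_le_mul_of_nonneg_left h2.le hs'
        linarith
    · have h3 : e = s • e + s' • e := by rw [← add_smul, hss, one_smul]
      refine Prod.ext ?_ ?_
      · simp [Φ]
      · simp only [Φ, Prod.fst_add, Prod.smul_fst, Prod.snd_add, Prod.smul_snd, map_add, map_smul,
          smul_add]
        conv_lhs => rw [h3]
        abel
  have h0 : (0 : (K → ℝ) × (I → ℝ)) ∉ Φ '' T := by
    rintro ⟨q, hq, hq0⟩
    have h1 : q.2 = 0 := congrArg Prod.fst hq0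
    have h2 : C q.1 + e = 0 := congrArg Prod.snd hq0
    refine hno ⟨q.1, fun k hk => ?_, fun i => ?_⟩
    · have := hq k hk; rwa [h1] at this
    · simpa [hC] using congrFun h2 i
  obtain ⟨G, hG⟩ := geometric_hahn_banach_point_open hSc hSo h0
  simp only [map_zero] at hG
  let y : K → ℝ := fun k => G (Pi.single k 1, 0)
  let lam : I → ℝ := fun i => G (0, Pi.single i 1)
  have hGr : ∀ u v, G (u, v) = ∑ k, y k * u k + ∑ i, lam i * v i := by
    intro u v
    have h1 : (u, v) = ∑ k, u k • ((Pi.single k 1, 0) : (K → ℝ) × (I → ℝ))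
        + ∑ i, v i • ((0, Pi.single i 1) : (K → ℝ) × (I → ℝ)) := by
      refine Prod.ext ?_ ?_
      · simp only [Prod.fst_add, Prod.fst_sum, Prod.smul_fst, smul_zero, Finset.sum_const_zero,
          add_zero]
        exact pi_eq_sum_univ' u |>.trans (by
          refine Finset.sum_congr rfl fun k _ => ?_
          congr 1)
      · simp only [Prod.snd_add, Prod.snd_sum, Prod.smul_snd, smul_zero, Finset.sum_const_zero,
          zero_add]
        exact pi_eq_sum_univ' v |>.trans (by
          refine Finset.sum_congr rfl fun k _ => ?_
          congr 1)
    rw [h1, map_add, map_sum, map_sum]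
    simp only [map_smul, smul_eq_mul]
    congr 1 <;> exact Finset.sum_congr rfl fun _ _ => mul_comm _ _
  -- basic inequality
  have hB : ∀ (z : E) (u : K → ℝ), (∀ k, P k → 0 < u k) →
      0 < ∑ k, y k * (a k z + b k + u k) + ∑ i, lam i * (c i z + e i) := by
    intro z u hu
    have := hG (Φ (z, fun k => a k z + b k + u k)) ⟨_, fun k hk => by
      have := hu k hk; simpa using this, rfl⟩
    rw [hGr] at this
    simpa [hC] using this
  have hsgn : ∀ k, ∀ σ : ℝ, (P k → 0 ≤ σ) → 0 ≤ σ * y k := by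
    intro k σ hσ
    refine aux_nonneg_of_forall
      (b := ∑ k, y k * (a k 0 + b k + 1) + ∑ i, lam i * (c i 0 + e i)) fun s hs => ?_
    have := hB 0 (fun j => 1 + if j = k then s * σ else 0) (fun j hj => by
      split_ifs with h
      · subst h; have := mul_nonneg hs (hσ hj); linarith
      · norm_num)
    have h2 : ∑ j, y j * (a j 0 + b j + (1 + if j = k then s * σ else 0))
        = ∑ j, y j * (a j 0 + b j + 1) + s * (σ * y k) := by
      have : ∀ j, y j * (a j 0 + b j + (1 + if j = k then s * σ else 0))
        = y j * (a j 0 + b j + 1) + if j = k then s * σ * y j else 0 := by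
        intro j; split_ifs <;> ring
      simp only [this, Finset.sum_add_distrib]
      simp; ring
    rw [h2] at this
    linarith
  have hy0 : ∀ k, 0 ≤ y k := fun k => by simpa using hsgn k 1 (fun _ => zero_le_one)
  have hW : ∀ z : E, 0 ≤ (∑ k, y k • a k + ∑ i, lam i • c i) z
      + (∑ k, y k * b k + ∑ i, lam i * e i) := by
    intro z
    have hε : ∀ ε : ℝ, 0 < ε → 0 ≤ ((∑ k, y k • a k + ∑ i, lam i • c i) z
      + (∑ k, y k * b k + ∑ i, lam i * e i)) + ε * ∑ k, y k := by
      intro ε hε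
      have := (hB z (fun _ => ε) (fun _ _ => hε)).le
      refine this.trans_eq ?_
      simp only [_root_.add_apply, _root_.sum_apply,
        _root_.smul_apply, smul_eq_mul, mul_add, Finset.sum_add_distrib,
        ← Finset.sum_mul]
      ring
    have hY : 0 ≤ ∑ k, y k := Finset.sum_nonneg fun k _ => hy0 k
    refine le_of_forall_pos_le_add fun δ hδ => ?_
    have := hε (δ / (∑ k, y k + 1)) (by positivity)
    have h3 : δ / (∑ k, y k + 1) * ∑ k, y k ≤ δ := by
      rw [div_mul_eq_mul_div, div_le_iff₀ (by positivity)]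
      nlinarith
    linarith
  refine ⟨y, lam, hy0, fun k hk => ?_, ?_, ?_, ?_⟩
  · have h1 := hsgn k (-1) (fun h => absurd h hk)
    linarith [hy0 k]
  · rintro ⟨h1, h2⟩
    have := hB 0 1 (fun _ _ => one_pos)
    rw [h1, h2] at this
    simp at this
  · ext z
    have h1 : ∀ z, 0 ≤ (∑ k, y k • a k + ∑ i, lam i • c i) z := fun z =>
      aux_nonneg_of_forall (b := ∑ k, y k * b k + ∑ i, lam i * e i) fun s _ => by
        simpa only [map_smul, smul_eq_mul] using hW (s • z)
    have h2 := h1 (-z)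
    rw [map_neg] at h2
    exact le_antisymm (neg_nonneg.1 h2) (h1 z)
  · simpa using hW 0

end helpers

section helpers2

lemma aux_fderiv_LagrG {n m p : ℕ} {f : (Fin n → ℝ) → ℝ} {h : Fin m → (Fin n → ℝ) → ℝ}
    {g : Fin p → (Fin n → ℝ) → ℝ}
    (hf : Differentiable ℝ f) (hh : ∀ i, Differentiable ℝ (h i))
    (hg : ∀ j, Differentiable ℝ (g j)) (l0 : ℝ) (lam : Fin m → ℝ) (mu : Fin p → ℝ) :
    fderiv ℝ (LagrG f h g l0 lam mu) = fun x => l0 • fderiv ℝ f x + ∑ i, lam i • fderiv ℝ (h i) x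
      + ∑ j, mu j • fderiv ℝ (g j) x := by
  funext x
  refine HasFDerivAt.fderiv ?_
  unfold LagrG
  refine (((hf x).hasFDerivAt.const_mul l0).add (HasFDerivAt.fun_sum fun i _ => ?_)).add
    (HasFDerivAt.fun_sum fun j _ => ?_)
  · exact (hh i x).hasFDerivAt.const_mul (lam i)
  · exact (hg j x).hasFDerivAt.const_mul (mu j)

lemma aux_hessQ_LagrG {n m p : ℕ} {f : (Fin n → ℝ) → ℝ} {h : Fin m → (Fin n → ℝ) → ℝ}
    {g : Fin p → (Fin n → ℝ) → ℝ}
    (hf : ContDiff ℝ 2 f) (hh : ∀ i, ContDiff ℝ 2 (h i)) (hg : ∀ j, ContDiff ℝ 2 (g j))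
    (l0 : ℝ) (lam : Fin m → ℝ) (mu : Fin p → ℝ) (x d : Fin n → ℝ) :
    hessQ (LagrG f h g l0 lam mu) x d = l0 * fderiv ℝ (fderiv ℝ f) x d d
      + ∑ i, lam i * fderiv ℝ (fderiv ℝ (h i)) x d d
      + ∑ j, mu j * fderiv ℝ (fderiv ℝ (g j)) x d d := by
  have hd : ∀ φ : (Fin n → ℝ) → ℝ, ContDiff ℝ 2 φ →
      HasFDerivAt (fderiv ℝ φ) (fderiv ℝ (fderiv ℝ φ) x) x := fun φ hφ => by
    have hφ' : ContDiff ℝ 1 (fderiv ℝ φ) := hφ.fderiv_right (by norm_num)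
    exact ((hφ'.differentiable (by simp)) x).hasFDerivAt
  unfold hessQ
  rw [iteratedFDeriv_two_apply, aux_fderiv_LagrG (hf.differentiable (by simp))
    (fun i => (hh i).differentiable (by simp)) (fun j => (hg j).differentiable (by simp))]
  have key := (((hd f hf).const_smul l0).add (HasFDerivAt.fun_sum (u := Finset.univ)
    fun i _ => (hd (h i) (hh i)).const_smul (lam i))).add
    (HasFDerivAt.fun_sum (u := Finset.univ) fun j _ => (hd (g j) (hg j)).const_smul (mu j))
  have key2 := key.fderiv
  have h3 := congrArg (fun A => A d d) key2
  refine Eq.trans ?_ (h3.trans ?_)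
  · rfl
  · simp

end helpers2

open Filter Topology Asymptotics

/-- At a local minimizer, for every critical direction there is a Fritz John
multiplier (depending on the direction) making the generalized Hessian quadratic form
nonnegative. -/
theorem stmt1 {n m p : ℕ} (f : (Fin n → ℝ) → ℝ) (h : Fin m → (Fin n → ℝ) → ℝ)
    (g : Fin p → (Fin n → ℝ) → ℝ)
    (hf : ContDiff ℝ 2 f) (hh : ∀ i, ContDiff ℝ 2 (h i)) (hg : ∀ j, ContDiff ℝ 2 (g j))
    (xs : Fin n → ℝ) (hfeas : Feas h g xs)
    (hmin : IsLocalMinOn f {x | Feas h g x} xs) :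
    ∀ d : Fin n → ℝ, critCone f h g xs d →
      ∃ (l0 : ℝ) (lam : Fin m → ℝ) (mu : Fin p → ℝ), IsFJMult f h g xs l0 lam mu ∧
        0 ≤ hessQ (LagrG f h g l0 lam mu) xs d := by
  intro d hd
  obtain ⟨hdf, hdh, hdg⟩ := hd
  have hfd : Differentiable ℝ f := hf.differentiable (by simp)
  have hhd : ∀ i, Differentiable ℝ (h i) := fun i => (hh i).differentiable (by simp)
  have hgd : ∀ j, Differentiable ℝ (g j) := fun j => (hg j).differentiable (by simp)
  by_cases hsurj : (ContinuousLinearMap.pi fun i => fderiv ℝ (h i) xs).range = ⊤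
  swap
  · -- dependent equality gradients
    obtain ⟨lam, hlam, hsum⟩ := aux_dep _ hsurj
    have main : ∀ lam : Fin m → ℝ, lam ≠ 0 → ∑ i, lam i • fderiv ℝ (h i) xs = 0 →
        0 ≤ ∑ i, lam i * fderiv ℝ (fderiv ℝ (h i)) xs d d →
        ∃ (l0 : ℝ) (lam : Fin m → ℝ) (mu : Fin p → ℝ), IsFJMult f h g xs l0 lam mu ∧
        0 ≤ hessQ (LagrG f h g l0 lam mu) xs d := by
      intro lam h1 h2 h3
      refine ⟨0, lam, 0, ⟨le_rfl, fun _ => le_rfl, ?_, by simp, ?_⟩, ?_⟩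
      · rw [aux_fderiv_LagrG hfd hhd hgd]
        simpa using h2
      · intro h; exact h1 (congrArg (fun q => q.2.1) h)
      · rw [aux_hessQ_LagrG hf hh hg]
        simpa using h3
    rcases le_total 0 (∑ i, lam i * fderiv ℝ (fderiv ℝ (h i)) xs d d) with hs | hs
    · exact main lam hlam hsum hs
    · refine main (-lam) (neg_ne_zero.2 hlam) ?_ ?_
      · ext z
        have h1 := congrArg (fun A => A z) hsum
        simpa using h1
      · simpa using hs
  · have hno : ¬ ∃ z, (∀ k : Option (Fin p),
        (k.elim True fun j => g j xs = 0 ∧ fderiv ℝ (g j) xs d = 0) →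
        (k.elim (fderiv ℝ f xs) fun j => fderiv ℝ (g j) xs) z +
        (k.elim (fderiv ℝ (fderiv ℝ f) xs d d) fun j => fderiv ℝ (fderiv ℝ (g j)) xs d d) < 0) ∧
        ∀ i, fderiv ℝ (h i) xs z + fderiv ℝ (fderiv ℝ (h i)) xs d d = 0 := by
      rintro ⟨z, hz1, hz2⟩
      have hzf := hz1 none trivial
      have hzg : ∀ j, g j xs = 0 → fderiv ℝ (g j) xs d = 0 →
        fderiv ℝ (g j) xs z + fderiv ℝ (fderiv ℝ (g j)) xs d d < 0 :=
        fun j h1 h2 => hz1 (some j) ⟨h1, h2⟩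
      simp only [Option.elim] at hzf
      have hw : Tendsto (fun t : ℝ => xs + t • d + ((t ^ 2 / 2) • z + (0 : Fin n → ℝ)))
          (𝓝[>] 0) (𝓝 xs) := by
        have : Tendsto (fun t : ℝ => xs + t • d + ((t ^ 2 / 2) • z + (0 : Fin n → ℝ)))
          (𝓝 0) (𝓝 (xs + (0 : ℝ) • d + (((0 : ℝ) ^ 2 / 2) • z + (0 : Fin n → ℝ)))) :=
          Continuous.tendsto (by fun_prop) 0
        simpa using this.mono_left nhdsWithin_le_nhds
      have hH : HasStrictFDerivAt (fun x i => h i x)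
          (ContinuousLinearMap.pi fun i => fderiv ℝ (h i) xs) xs :=
        hasStrictFDerivAt_pi.2 fun i => (hh i).contDiffAt.hasStrictFDerivAt (by simp)
      obtain ⟨r, hr, hr0⟩ := aux_correct hH hsurj _ hw (by
        rw [isLittleO_pi]
        intro i
        have := aux_taylor_curve (hh i) xs d z (fun _ => 0) (isLittleO_zero _ _)
        simpa [hfeas.1 i, hdh i, hz2 i] using this)
      have hx : Tendsto (fun t : ℝ => xs + t • d + ((t ^ 2 / 2) • z + r t)) (𝓝[>] 0) (𝓝 xs) := by
        have hsq : Tendsto (fun t : ℝ => t ^ 2) (𝓝[>] 0) (𝓝 0) := by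
          have : Tendsto (fun t : ℝ => t ^ 2) (𝓝 0) (𝓝 (0 ^ 2)) := (continuous_pow 2).tendsto 0
          simpa using this.mono_left nhdsWithin_le_nhds
        have := hw.add (hr.isBigO.trans_tendsto hsq)
        simpa [add_assoc] using this
      have hfneg := aux_neg_s1 (ψ := fun t : ℝ => f (xs + t • d + ((t ^ 2 / 2) • z + r t)) - f xs)
        hdf.le (fun _ => hzf) (aux_taylor_curve hf xs d z r hr)
      have hgneg : ∀ j, ∀ᶠ t : ℝ in 𝓝[>] 0, g j (xs + t • d + ((t ^ 2 / 2) • z + r t)) < 0 := by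
        intro j
        by_cases hj : g j xs = 0
        · have := aux_neg_s1
            (ψ := fun t : ℝ => g j (xs + t • d + ((t ^ 2 / 2) • z + r t)) - g j xs)
            (hdg j hj) (fun h0 => hzg j hj h0) (aux_taylor_curve (hg j) xs d z r hr)
          simpa [hj] using this
        · have hlt : g j xs < 0 := lt_of_le_of_ne (hfeas.2 j) hj
          exact (((hg j).continuous.tendsto xs).comp hx).eventually (gt_mem_nhds hlt)
      have hmin' := eventually_nhdsWithin_iff.1 hmin
      obtain ⟨t, ht1, ht2, ht3, ht4⟩ := ((hx.eventually hmin').and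
        (hr0.and (hfneg.and (eventually_all.2 hgneg)))).exists
      have hfe : Feas h g (xs + t • d + ((t ^ 2 / 2) • z + r t)) := by
        refine ⟨fun i => ?_, fun j => (ht4 j).le⟩
        have := congrFun ht2 i
        simpa [add_assoc] using this
      have := ht1 hfe
      linarith
    obtain ⟨y, lam, hy, hyP, hne, hgrad, hhess⟩ := aux_motzkin _ _ _ _ _ hsurj hno
    rw [Fintype.sum_option] at hgrad hhess
    simp only [Option.elim] at hgrad hhess
    refine ⟨y none, lam, fun j => y (some j), ⟨hy _, fun j => hy _, ?_, ?_, ?_⟩, ?_⟩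
    · rw [aux_fderiv_LagrG hfd hhd hgd, ← hgrad]
      simp only
      abel
    · intro j
      by_cases hj : g j xs = 0
      · simp [hj]
      · simp [hyP (some j) (fun h => hj h.1)]
    · intro h
      simp only [Prod.mk.injEq] at h
      refine hne ⟨?_, h.2.1⟩
      funext k
      cases k with
      | none => exact h.1
      | some j => exact congrFun h.2.2 j
    · rw [aux_hessQ_LagrG hf hh hg]
      linarith
end
end

section
/- (Baccari–Trad) Let x* be a local minimizer of (NLP) such that MFCQ holds at x* and the rank of the Jacobian matrix J(x*) ∈ ℝ^{(m+q)×n} is m+q−1, where q is the number of active inequality constraints at x*. Then there exists a Lagrange multiplier (λ,μ) ∈ Λ(x*) such that WSOC holds, i.e. dᵀ∇²ₓₓL(x*,λ,μ)d ≥ 0 for all d ∈ S(x*). -/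
open scoped BigOperators Pointwise
open Matrix

attribute [local instance] Classical.propDecidable

noncomputable section

/-- Linearly independent functionals are jointly surjective. -/
lemma pi_surj_of_li {ι : Type} [Fintype ι] {n : ℕ} (H : ι → (Fin n → ℝ) →L[ℝ] ℝ)
    (hH : LinearIndependent ℝ H) :
    Function.Surjective (ContinuousLinearMap.pi H) := by
  have key : Function.Surjective (LinearMap.pi fun i => (H i : (Fin n → ℝ) →ₗ[ℝ] ℝ)) := by
    rw [← LinearMap.dualMap_injective_iff, injective_iff_map_eq_zero]
    intro φ hφ
    have h1 : ∀ w : ι → ℝ, φ w = ∑ i, φ (Pi.single i 1) * w i := by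
      intro w
      conv_lhs => rw [← Finset.univ_sum_single w]
      rw [map_sum]
      refine Finset.sum_congr rfl fun i _ => ?_
      have : (Pi.single i (w i) : ι → ℝ) = w i • Pi.single i 1 := by
        rw [← Pi.single_smul]; simp
      rw [this, map_smul, smul_eq_mul, mul_comm]
    have h2 : ∑ i, φ (Pi.single i 1) • H i = 0 := by
      ext1 z
      have := LinearMap.congr_fun hφ z
      simp only [LinearMap.dualMap_apply] at this
      rw [h1] at this
      simpa [_root_.sum_apply] using this
    have h3 := Fintype.linearIndependent_iff.1 hH _ h2
    ext w
    simp [h3]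
  intro b
  obtain ⟨z, hz⟩ := key b
  exact ⟨z, by ext i; simpa using congrFun hz i⟩

/-- Theorem of the alternative, with the MFCQ normalization. -/
lemma alt_mult {ι κ : Type} [Fintype ι] [Fintype κ] {n : ℕ}
    (F : (Fin n → ℝ) →L[ℝ] ℝ) (H : ι → (Fin n → ℝ) →L[ℝ] ℝ) (G : κ → (Fin n → ℝ) →L[ℝ] ℝ)
    (cf : ℝ) (ch : ι → ℝ) (cg : κ → ℝ) (hH : LinearIndependent ℝ H)
    (d0 : Fin n → ℝ) (hd0 : ∀ i, H i d0 = 0) (hd1 : ∀ j, G j d0 < 0)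
    (hno : ¬ ∃ z, F z + cf < 0 ∧ (∀ i, H i z + ch i = 0) ∧ ∀ j, G j z + cg j < 0) :
    ∃ (lam : ι → ℝ) (mu : κ → ℝ), (∀ j, 0 ≤ mu j) ∧
      (F + ∑ i, lam i • H i + ∑ j, mu j • G j = 0) ∧
      0 ≤ cf + ∑ i, lam i * ch i + ∑ j, mu j * cg j := by
  classical
  let T := {b : ℝ × (ι → ℝ) × (κ → ℝ) | ∃ z, F z < b.1 ∧ (∀ i, H i z = b.2.1 i) ∧
    ∀ j, G j z < b.2.2 j}
  have hconv : Convex ℝ T := by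
    rintro a ⟨z, h1, h2, h3⟩ b ⟨w, k1, k2, k3⟩ s t hs ht hst
    refine ⟨s • z + t • w, ?_, ?_, ?_⟩
    · simp only [map_add, map_smul, smul_eq_mul, Prod.fst_add, Prod.smul_fst]
      rcases hs.eq_or_lt with rfl | hs
      · have : t = 1 := by linarith
        subst this; simpa using k1
      · nlinarith [mul_lt_mul_of_pos_left h1 hs, mul_le_mul_of_nonneg_left k1.le ht]
    · intro i
      simp [h2 i, k2 i]
    · intro j
      simp only [map_add, map_smul, smul_eq_mul, Prod.snd_add, Prod.smul_snd, Pi.add_apply,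
        Pi.smul_apply]
      rcases hs.eq_or_lt with rfl | hs
      · have : t = 1 := by linarith
        subst this; simpa using k3 j
      · nlinarith [mul_lt_mul_of_pos_left (h3 j) hs, mul_le_mul_of_nonneg_left (k3 j).le ht]
  have hsurj := pi_surj_of_li H hH
  have hopen : IsOpen T := by
    -- the affine-linear map
    let M : ((Fin n → ℝ) × ℝ × (κ → ℝ)) →L[ℝ] (ℝ × (ι → ℝ) × (κ → ℝ)) :=
      (F.comp (ContinuousLinearMap.fst ℝ _ _) +
        (ContinuousLinearMap.fst ℝ _ _).comp (ContinuousLinearMap.snd ℝ _ _)).prod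
      (((ContinuousLinearMap.pi H).comp (ContinuousLinearMap.fst ℝ _ _)).prod
        ((ContinuousLinearMap.pi G).comp (ContinuousLinearMap.fst ℝ _ _) +
        (ContinuousLinearMap.snd ℝ _ _).comp (ContinuousLinearMap.snd ℝ _ _)))
    have hM : ∀ z r s, M (z, r, s) = (F z + r, fun i => H i z, fun j => G j z + s j) := by
      intro z r s; rfl
    have hMs : Function.Surjective M := by
      rintro ⟨a, b, c⟩
      obtain ⟨z, hz⟩ := hsurj b
      refine ⟨(z, a - F z, fun j => c j - G j z), ?_⟩
      rw [hM]
      ext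
      · simp
      · simpa using congrFun hz _
      · simp
    have hTM : T = M '' (Set.univ ×ˢ (Set.Ioi 0 ×ˢ Set.univ.pi fun _ => Set.Ioi 0)) := by
      ext ⟨a, b, c⟩
      constructor
      · rintro ⟨z, h1, h2, h3⟩
        refine ⟨(z, a - F z, fun j => c j - G j z), ?_, ?_⟩
        · simp only [Set.mem_prod, Set.mem_univ, Set.mem_Ioi, Set.mem_pi, true_and]
          exact ⟨sub_pos.2 h1, fun j _ => sub_pos.2 (h3 j)⟩
        · rw [hM]
          ext
          · simp
          · simpa using h2 _
          · simp
      · rintro ⟨⟨z, r, s⟩, ⟨-, hr, hs⟩, he⟩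
        rw [hM] at he
        simp only [Prod.mk.injEq] at he
        obtain ⟨rfl, rfl, rfl⟩ := he
        refine ⟨z, ?_, fun i => rfl, fun j => ?_⟩
        · simpa using hr
        · simpa using hs j (Set.mem_univ j)
    rw [hTM]
    apply M.isOpenMap hMs
    exact isOpen_univ.prod (isOpen_Ioi.prod (isOpen_set_pi Set.finite_univ fun _ _ => isOpen_Ioi))
  have hnot : ((-cf, (fun i => - ch i), (fun j => - cg j)) : ℝ × (ι → ℝ) × (κ → ℝ)) ∉ T := by
    rintro ⟨z, h1, h2, h3⟩
    simp only at h1 h2 h3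
    exact hno ⟨z, by linarith, fun i => by linarith [h2 i], fun j => by linarith [h3 j]⟩
  obtain ⟨φ, hφ⟩ := geometric_hahn_banach_point_open hconv hopen hnot
  obtain ⟨α, lam, mu, hrep⟩ : ∃ (α : ℝ) (lam : ι → ℝ) (mu : κ → ℝ), ∀ a b c,
      φ (a, b, c) = α * a + ∑ i, lam i * b i + ∑ j, mu j * c j := by
    refine ⟨φ (1, 0, 0), fun i => φ (0, Pi.single i 1, 0), fun j => φ (0, 0, Pi.single j 1), ?_⟩
    intro a b c
    have e : ((a, b, c) : ℝ × (ι → ℝ) × (κ → ℝ)) = a • (1, 0, 0) +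
        ∑ i, b i • ((0, Pi.single i 1, 0) : ℝ × (ι → ℝ) × (κ → ℝ)) +
        ∑ j, c j • ((0, 0, Pi.single j 1) : ℝ × (ι → ℝ) × (κ → ℝ)) := by
      ext k
      · simp [Prod.fst_sum]
      · simp [Prod.fst_sum, Prod.snd_sum, Finset.sum_apply, Pi.single_apply]
      · simp [Prod.snd_sum, Finset.sum_apply, Pi.single_apply]
    rw [e]
    simp only [map_add, map_sum, map_smul, smul_eq_mul]
    simp only [mul_comm]
  set C := α * cf + ∑ i, lam i * ch i + ∑ j, mu j * cg j with hC
  set P : (Fin n → ℝ) →L[ℝ] ℝ := α • F + ∑ i, lam i • H i + ∑ j, mu j • G j with hP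
  have main : ∀ z (r : ℝ) (s : κ → ℝ), 0 < r → (∀ j, 0 < s j) →
      0 < C + P z + α * r + ∑ j, mu j * s j := by
    intro z r s hr hs
    have := hφ (F z + r, fun i => H i z, fun j => G j z + s j)
      ⟨z, by simpa using hr, fun i => rfl, fun j => by simpa using hs j⟩
    rw [hrep, hrep] at this
    simp only [hC, hP, _root_.add_apply, _root_.sum_apply,
      _root_.smul_apply, smul_eq_mul, mul_add, Finset.sum_add_distrib, mul_neg,
      Finset.sum_neg_distrib] at this ⊢
    linarith
  have aux : ∀ A B : ℝ, (∀ t : ℝ, 0 < t → 0 < A + B * t) → 0 ≤ B := by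
    intro A B hAB
    by_contra hB
    push Not at hB
    have := hAB ((|A| + 1) / (-B)) (by have := abs_nonneg A; apply div_pos <;> linarith)
    have e : B * ((|A| + 1) / (-B)) = -(|A| + 1) := by
      have hB0 : B ≠ 0 := hB.ne
      field_simp
    rw [e] at this
    linarith [le_abs_self A]
  have aux2 : ∀ A B : ℝ, (∀ t : ℝ, 0 < t → 0 < A + B * t) → 0 ≤ A := by
    intro A B hAB
    have ht : Filter.Tendsto (fun t : ℝ => A + B * t) (nhdsWithin 0 (Set.Ioi 0))
        (nhds (A + B * 0)) := by
      apply Filter.Tendsto.mono_left _ nhdsWithin_le_nhds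
      exact (Continuous.tendsto (by fun_prop) 0)
    have := ge_of_tendsto ht (Filter.eventually_of_mem self_mem_nhdsWithin
      fun t ht' => (hAB t ht').le)
    simpa using this
  have hPn : ∀ z, 0 ≤ P z := by
    intro z
    apply aux (C + α * 1 + ∑ j, mu j * 1)
    intro t ht
    have := main (t • z) 1 (fun _ => 1) one_pos (fun _ => one_pos)
    rw [map_smul, smul_eq_mul] at this
    linarith
  have hP0 : ∀ z, P z = 0 := by
    intro z
    have h1 := hPn z
    have h2 := hPn (-z)
    rw [map_neg] at h2
    linarith
  have hα : 0 ≤ α := by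
    apply aux (C + ∑ j, mu j * 1)
    intro t ht
    have := main 0 t (fun _ => 1) ht (fun _ => one_pos)
    rw [map_zero] at this
    linarith
  have hmu : ∀ j, 0 ≤ mu j := by
    intro j
    apply aux (C + α * 1 + ∑ j, mu j * 1)
    intro t ht
    have := main 0 1 (fun k => 1 + if k = j then t else 0) one_pos
      (fun k => by split_ifs <;> linarith)
    rw [map_zero] at this
    simp only [mul_add, Finset.sum_add_distrib, mul_ite, mul_zero, Finset.sum_ite_eq',
      Finset.mem_univ, if_true] at this
    linarith
  have hCn : 0 ≤ C := by
    apply aux2 C (α + ∑ j, mu j)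
    intro t ht
    have := main 0 t (fun _ => t) ht (fun _ => ht)
    rw [map_zero, ← Finset.sum_mul] at this
    linarith
  have hαpos : 0 < α := by
    rcases hα.eq_or_lt with h0 | h0
    swap
    · exact h0
    exfalso
    have hd := hP0 d0
    simp only [hP, ← h0, _root_.add_apply, _root_.sum_apply,
      _root_.smul_apply, smul_eq_mul, hd0, mul_zero, Finset.sum_const_zero,
      zero_mul, zero_add] at hd
    have hmu0 : ∀ j, mu j = 0 := by
      intro j
      have := (Finset.sum_eq_zero_iff_of_nonpos (s := Finset.univ)
        (f := fun j => mu j * G j d0)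
        (fun j _ => mul_nonpos_of_nonneg_of_nonpos (hmu j) (hd1 j).le)).1 hd j (Finset.mem_univ j)
      rcases mul_eq_zero.1 this with h | h
      · exact h
      · exact absurd h (hd1 j).ne
    have hlam0 : ∀ i, lam i = 0 := by
      apply Fintype.linearIndependent_iff.1 hH
      ext1 z
      have := hP0 z
      simpa [hP, ← h0, hmu0] using this
    have := main 0 1 (fun _ => 1) one_pos (fun _ => one_pos)
    simp [hC, ← h0, hmu0, hlam0] at this
  refine ⟨fun i => α⁻¹ * lam i, fun j => α⁻¹ * mu j, fun j => mul_nonneg (inv_nonneg.2 hα) (hmu j),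
    ?_, ?_⟩
  · ext1 z
    have := congrArg (fun x => α⁻¹ * x) (hP0 z)
    simp only [hP, _root_.add_apply, _root_.sum_apply,
      _root_.smul_apply, smul_eq_mul, mul_add, Finset.mul_sum, mul_zero,
      ← mul_assoc, inv_mul_cancel₀ hαpos.ne', one_mul] at this
    simpa using this
  · have := mul_nonneg (inv_nonneg.2 hα) hCn
    simp only [hC, mul_add, Finset.mul_sum, ← mul_assoc, inv_mul_cancel₀ hαpos.ne', one_mul] at this
    exact this

/-- A Yuan-type lemma: a one-parameter family of quadratic forms on a subspace. -/
lemma yuan_param {n : ℕ} (S : Submodule ℝ (Fin n → ℝ))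
    (A B : (Fin n → ℝ) →L[ℝ] (Fin n → ℝ) →L[ℝ] ℝ)
    (hA : ∀ x y, A x y = A y x) (hB : ∀ x y, B x y = B y x)
    (T : Set ℝ) (hTc : IsCompact T) (hTp : IsPreconnected T) (hTn : T.Nonempty)
    (hmax : ∀ d ∈ S, ∃ t ∈ T, 0 ≤ A d d + t * B d d) :
    ∃ t ∈ T, ∀ d ∈ S, 0 ≤ A d d + t * B d d := by
  by_contra hcon
  push Not at hcon
  let U := {t : ℝ | ∃ d ∈ S, A d d + t * B d d < 0 ∧ 0 < B d d}
  let V := {t : ℝ | ∃ d ∈ S, A d d + t * B d d < 0 ∧ B d d < 0}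
  have hU : IsOpen U := by
    have : U = ⋃ d ∈ S, {t : ℝ | A d d + t * B d d < 0 ∧ 0 < B d d} := by
      ext t; simp only [U, Set.mem_ofPred_eq, Set.mem_iUnion, exists_prop]
    rw [this]
    refine isOpen_biUnion fun d _ => ?_
    have h1 : IsOpen {t : ℝ | A d d + t * B d d < 0} := isOpen_lt (by fun_prop) (by fun_prop)
    exact h1.inter isOpen_const
  have hV : IsOpen V := by
    have : V = ⋃ d ∈ S, {t : ℝ | A d d + t * B d d < 0 ∧ B d d < 0} := by
      ext t; simp only [V, Set.mem_ofPred_eq, Set.mem_iUnion, exists_prop]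
    rw [this]
    refine isOpen_biUnion fun d _ => ?_
    have h1 : IsOpen {t : ℝ | A d d + t * B d d < 0} := isOpen_lt (by fun_prop) (by fun_prop)
    exact h1.inter isOpen_const
  obtain ⟨a, haT, ha⟩ := hTc.exists_isLeast hTn
  obtain ⟨b, hbT, hb⟩ := hTc.exists_isGreatest hTn
  have hcov : T ⊆ U ∪ V := by
    intro t ht
    obtain ⟨d, hd, hneg⟩ := hcon t ht
    obtain ⟨s, hs, hpos⟩ := hmax d hd
    rcases lt_trichotomy (B d d) 0 with h | h | h
    · exact Or.inr ⟨d, hd, hneg, h⟩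
    · rw [h] at hneg hpos; linarith
    · exact Or.inl ⟨d, hd, hneg, h⟩
  have haU : a ∈ U := by
    obtain ⟨d, hd, hneg⟩ := hcon a haT
    obtain ⟨s, hs, hpos⟩ := hmax d hd
    refine ⟨d, hd, hneg, ?_⟩
    have := ha hs
    by_contra hB'
    push Not at hB'
    nlinarith
  have hbV : b ∈ V := by
    obtain ⟨d, hd, hneg⟩ := hcon b hbT
    obtain ⟨s, hs, hpos⟩ := hmax d hd
    refine ⟨d, hd, hneg, ?_⟩
    have := hb hs
    by_contra hB'
    push Not at hB'
    nlinarith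
  obtain ⟨t, htT, ⟨d1, hd1, hq1, hb1⟩, ⟨d2, hd2, hq2, hb2⟩⟩ :=
    hTp U V hU hV hcov ⟨a, haT, haU⟩ ⟨b, hbT, hbV⟩
  -- make the cross term nonpositive
  obtain ⟨e, heS, hqe, hbe, hcross⟩ : ∃ e ∈ S, A e e + t * B e e < 0 ∧ B e e < 0 ∧
      A d1 e + t * B d1 e ≤ 0 := by
    rcases le_total (A d1 d2 + t * B d1 d2) 0 with h | h
    · exact ⟨d2, hd2, hq2, hb2, h⟩
    · refine ⟨-d2, S.neg_mem hd2, by simpa using hq2, by simpa using hb2, ?_⟩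
      simp only [map_neg]; linarith
  let γ : ℝ → (Fin n → ℝ) := fun s => (1 - s) • d1 + s • e
  have hcont : ContinuousOn (fun s => B (γ s) (γ s)) (Set.Icc 0 1) := by
    apply Continuous.continuousOn
    fun_prop
  have hivt := intermediate_value_Icc' (zero_le_one (α := ℝ)) hcont
  obtain ⟨s, ⟨hs0, hs1⟩, hs⟩ := hivt (show (0 : ℝ) ∈ Set.Icc _ _ by
    simp only [γ]; constructor <;> simp <;> linarith)
  simp only at hs
  have hγS : γ s ∈ S := S.add_mem (S.smul_mem _ hd1) (S.smul_mem _ heS)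
  have hneg : A (γ s) (γ s) + t * B (γ s) (γ s) < 0 := by
    have e1 : A (γ s) (γ s) + t * B (γ s) (γ s) = (1 - s) ^ 2 * (A d1 d1 + t * B d1 d1) +
        2 * (s * (1 - s)) * (A d1 e + t * B d1 e) + s ^ 2 * (A e e + t * B e e) := by
      simp only [γ, map_add, map_smul, _root_.add_apply,
        _root_.smul_apply, smul_eq_mul, hA e d1, hB e d1]
      ring
    rw [e1]
    have h2 : 2 * (s * (1 - s)) * (A d1 e + t * B d1 e) ≤ 0 :=
      mul_nonpos_of_nonneg_of_nonpos (by nlinarith) hcross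
    have h1 : (1 - s) ^ 2 * (A d1 d1 + t * B d1 d1) ≤ 0 :=
      mul_nonpos_of_nonneg_of_nonpos (sq_nonneg _) hq1.le
    have h3 : s ^ 2 * (A e e + t * B e e) ≤ 0 :=
      mul_nonpos_of_nonneg_of_nonpos (sq_nonneg _) hqe.le
    rcases hs0.eq_or_lt with rfl | hs0
    · simp; linarith
    · have : s ^ 2 * (A e e + t * B e e) < 0 := mul_neg_of_pos_of_neg (by positivity) hqe
      linarith
  obtain ⟨r, hr, hpos⟩ := hmax _ hγS
  rw [hs] at hneg hpos
  linarith

open Filter Topology Asymptotics in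
/-- Second order Taylor expansion. -/
lemma taylor_two {n : ℕ} (φ : (Fin n → ℝ) → ℝ) (hφ : ContDiff ℝ 2 φ) (x : Fin n → ℝ) :
    (fun u => φ (x + u) - φ x - fderiv ℝ φ x u - (1 / 2) * fderiv ℝ (fderiv ℝ φ) x u u)
      =o[𝓝 0] fun u => ‖u‖ ^ 2 := by
  have hsymm : ∀ u v, fderiv ℝ (fderiv ℝ φ) x u v = fderiv ℝ (fderiv ℝ φ) x v u := by
    have := hφ.contDiffAt.isSymmSndFDerivAt (x := x) (by simp)
    exact fun u v => this.eq u v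
  have hd1 : Differentiable ℝ φ := hφ.differentiable (by norm_num)
  have hd2 : Differentiable ℝ (fderiv ℝ φ) :=
    (hφ.fderiv_right (m := 1) (by norm_num)).differentiable (by norm_num)
  set B := fderiv ℝ (fderiv ℝ φ) x with hB
  set R := fun u => φ (x + u) - φ x - fderiv ℝ φ x u - (1 / 2) * B u u with hR
  have hder : ∀ u, HasFDerivAt R (fderiv ℝ φ (x + u) - fderiv ℝ φ x - B u) u := by
    intro u
    have h1 : HasFDerivAt (fun u => φ (x + u)) (fderiv ℝ φ (x + u)) u := by
      have := (hd1 (x + u)).hasFDerivAt.comp u ((hasFDerivAt_id u).const_add x)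
      exact this.congr_fderiv (by ext; simp)
    have h2 : HasFDerivAt (fun u => fderiv ℝ φ x u) (fderiv ℝ φ x) u :=
      (fderiv ℝ φ x).hasFDerivAt
    have h3 := (B.hasFDerivAt (x := u)).clm_apply (hasFDerivAt_id u)
    have h4 := ((h1.sub_const (φ x)).sub h2).sub (h3.const_mul (1 / 2))
    refine h4.congr_fderiv ?_
    ext v
    simp [hsymm v u]
    ring
  have ho : (fun u => fderiv ℝ φ (x + u) - fderiv ℝ φ x - B u) =o[𝓝 0] fun u => u := by
    have := hasFDerivAt_iff_isLittleO_nhds_zero.1 (hd2 x).hasFDerivAt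
    exact this
  rw [isLittleO_iff]
  intro ε hε
  have hev := (isLittleO_iff.1 ho) hε
  obtain ⟨δ, hδ, hball⟩ := Metric.eventually_nhds_iff_ball.1 hev
  refine Metric.eventually_nhds_iff_ball.2 ⟨δ, hδ, fun u hu => ?_⟩
  have hu' : ‖u‖ < δ := by simpa using hu
  have := (convex_closedBall (0 : Fin n → ℝ) ‖u‖).norm_image_sub_le_of_norm_hasFDerivWithin_le
    (f := R) (C := ε * ‖u‖) (x := 0) (y := u)
    (fun v _ => (hder v).hasFDerivWithinAt)
    (fun v hv => by
      have hv' : ‖v‖ ≤ ‖u‖ := by simpa using hv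
      refine (hball v (by simpa using lt_of_le_of_lt hv' hu')).trans ?_
      gcongr) (by simp) (by simp)
  have hR0 : R 0 = 0 := by simp [hR]
  rw [hR0, sub_zero, sub_zero] at this
  calc ‖R u‖ ≤ ε * ‖u‖ * ‖u‖ := this
    _ = ε * ‖‖u‖ ^ 2‖ := by rw [norm_pow, norm_norm]; ring

open Filter Topology Asymptotics in
/-- Second order expansion along a curve. -/
lemma curve_two {n : ℕ} (φ : (Fin n → ℝ) → ℝ) (hφ : ContDiff ℝ 2 φ) (x d w : Fin n → ℝ)
    (hd : fderiv ℝ φ x d = 0) (u : ℝ → (Fin n → ℝ))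
    (hu : Tendsto (fun t => (t ^ 2)⁻¹ • (u t - t • d)) (𝓝[>] (0 : ℝ)) (𝓝 w)) :
    Tendsto (fun t => (t ^ 2)⁻¹ * (φ (x + u t) - φ x)) (𝓝[>] (0 : ℝ))
      (𝓝 (fderiv ℝ φ x w + (1 / 2) * fderiv ℝ (fderiv ℝ φ) x d d)) := by
  have hpos : ∀ᶠ t : ℝ in 𝓝[>] (0 : ℝ), 0 < t := self_mem_nhdsWithin
  have hid : Tendsto (fun t : ℝ => t) (𝓝[>] (0 : ℝ)) (𝓝 0) :=
    tendsto_id.mono_left nhdsWithin_le_nhds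
  have h1 : Tendsto (fun t => t⁻¹ • u t) (𝓝[>] (0 : ℝ)) (𝓝 d) := by
    have := (hid.smul hu).add_const d
    rw [zero_smul, zero_add] at this
    refine this.congr' ?_
    filter_upwards [hpos] with t ht
    rw [smul_smul, smul_sub, smul_smul]
    have e1 : t * (t ^ 2)⁻¹ = t⁻¹ := by field_simp
    have e2 : t⁻¹ * t = 1 := by field_simp
    rw [e1, e2, one_smul, sub_add_cancel]
  have h2 : Tendsto u (𝓝[>] (0 : ℝ)) (𝓝 0) := by
    have := hid.smul h1
    rw [zero_smul] at this
    refine this.congr' ?_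
    filter_upwards [hpos] with t ht
    rw [smul_smul, mul_inv_cancel₀ ht.ne', one_smul]
  have h3 := (taylor_two φ hφ x).comp_tendsto h2
  have h4 : (fun t => ‖u t‖ ^ 2) =O[𝓝[>] (0 : ℝ)] fun t => t ^ 2 := by
    have : (fun t => u t) =O[𝓝[>] (0 : ℝ)] fun t => t := by
      have hb := h1.isBigO_one ℝ
      have := (isBigO_refl (fun t : ℝ => t) (𝓝[>] (0 : ℝ))).smul hb
      refine (this.congr' ?_ ?_)
      · filter_upwards [hpos] with t ht
        rw [smul_smul, mul_inv_cancel₀ ht.ne', one_smul]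
      · filter_upwards with t
        simp
    exact this.norm_left.pow 2
  have h5 := (h3.trans_isBigO h4).tendsto_div_nhds_zero
  have hw := ((fderiv ℝ φ x).continuous.tendsto w).comp hu
  have hBc : Tendsto (fun t => fderiv ℝ (fderiv ℝ φ) x (t⁻¹ • u t) (t⁻¹ • u t)) (𝓝[>] (0 : ℝ))
      (𝓝 (fderiv ℝ (fderiv ℝ φ) x d d)) := by
    have hc : Continuous fun v => fderiv ℝ (fderiv ℝ φ) x v v := by fun_prop
    exact (hc.tendsto d).comp h1
  have h6 := (hw.add (hBc.const_mul (1 / 2))).add h5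
  rw [add_zero] at h6
  refine h6.congr' ?_
  filter_upwards [hpos] with t ht
  simp only [Function.comp, map_smul, map_sub, hd, smul_eq_mul, mul_zero, sub_zero,
    _root_.smul_apply]
  field_simp
  ring

open Filter Topology Asymptotics in
/-- Local correction onto the zero set of a submersion. -/
lemma correction {n m : ℕ} (H : (Fin n → ℝ) → (Fin m → ℝ)) (H' : (Fin n → ℝ) →L[ℝ] (Fin m → ℝ))
    (x : Fin n → ℝ) (hH : HasStrictFDerivAt H H' x) (hs : Function.Surjective H')
    (hx : H x = 0) :
    ∃ ψ : (Fin n → ℝ) → (Fin n → ℝ), (∀ᶠ y in 𝓝 x, H (ψ y) = 0) ∧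
      (fun y => ψ y - y) =O[𝓝 x] H := by
  obtain ⟨R0, hR0⟩ := (H' : (Fin n → ℝ) →ₗ[ℝ] (Fin m → ℝ)).exists_rightInverse_of_surjective
    (LinearMap.range_eq_top.2 hs)
  let R : (Fin m → ℝ) →L[ℝ] (Fin n → ℝ) := LinearMap.toContinuousLinearMap R0
  have hR : ∀ v, H' (R v) = v := fun v => LinearMap.congr_fun hR0 v
  let Φ : (Fin n → ℝ) → (Fin n → ℝ) := fun y => y + R (H y - H' (y - x))
  have hΦx : Φ x = x := by simp [Φ, hx]
  have hΦ : HasStrictFDerivAt Φ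
      ((ContinuousLinearEquiv.refl ℝ (Fin n → ℝ) : (Fin n → ℝ) →L[ℝ] (Fin n → ℝ))) x := by
    have h1 : HasStrictFDerivAt (fun y => H' (y - x)) H' x := by
      have := H'.hasStrictFDerivAt.comp x ((hasStrictFDerivAt_id x).sub_const x)
      simpa using this
    have h2 := (hasStrictFDerivAt_id x).add (R.hasStrictFDerivAt.comp x (hH.sub h1))
    refine h2.congr_fderiv ?_
    ext v
    simp
  have hHΦ : ∀ y, H' (Φ y - x) = H y := by
    intro y
    have : Φ y - x = (y - x) + R (H y - H' (y - x)) := by simp only [Φ]; abel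
    rw [this, map_add, hR]; abel
  let Ψ := hΦ.localInverse Φ _ x
  have hΨ := hΦ.to_localInverse
  rw [hΦx] at hΨ
  have hleft : ∀ᶠ y in 𝓝 x, Ψ (Φ y) = y := hΦ.eventually_left_inverse
  have hright : ∀ᶠ y in 𝓝 x, Φ (Ψ y) = y := by
    have := hΦ.eventually_right_inverse
    rwa [hΦx] at this
  have hcΦ : Tendsto Φ (𝓝 x) (𝓝 x) := by
    have := hΦ.continuousAt.tendsto
    rwa [hΦx] at this
  have hcH : Tendsto (fun y => Φ y - R (H y)) (𝓝 x) (𝓝 x) := by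
    have := hcΦ.sub ((R.continuous.tendsto (H x)).comp hH.continuousAt.tendsto)
    simpa [hx] using this
  refine ⟨fun y => Ψ (Φ y - R (H y)), ?_, ?_⟩
  · filter_upwards [hcH.eventually hright] with y hy
    rw [← hHΦ, hy]
    have : Φ y - R (H y) - x = (Φ y - x) - R (H y) := by abel
    rw [this, map_sub, hHΦ, hR, sub_self]
  · have h1 := hΨ.isBigO_sub.comp_tendsto (hcH.prodMk_nhds hcΦ)
    have h2 : (fun y => (Φ y - R (H y)) - Φ y) =O[𝓝 x] H := by
      have := (R.isBigO_comp H (𝓝 x)).neg_left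
      refine this.congr_left fun y => ?_
      abel
    refine IsBigO.trans ?_ h2
    refine h1.congr' ?_ (by filter_upwards with y; rfl)
    filter_upwards [hleft] with y hy
    show Ψ _ - Ψ (Φ y) = _
    rw [hy]

open Filter Topology Asymptotics in
/-- Second order necessary condition under MFCQ, for directions in the critical subspace. -/
lemma sonc {n m p : ℕ} (f : (Fin n → ℝ) → ℝ) (h : Fin m → (Fin n → ℝ) → ℝ)
    (g : Fin p → (Fin n → ℝ) → ℝ)
    (hf : ContDiff ℝ 2 f) (hh : ∀ i, ContDiff ℝ 2 (h i)) (hg : ∀ j, ContDiff ℝ 2 (g j))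
    (xs : Fin n → ℝ) (hfeas : Feas h g xs)
    (hmin : IsLocalMinOn f {x | Feas h g x} xs)
    (hmfcq : MFCQ h g xs) (d : Fin n → ℝ) (hfd : fderiv ℝ f xs d = 0) (hd : critSub h g xs d) :
    ∃ (lam : Fin m → ℝ) (mu : {j : Fin p // g j xs = 0} → ℝ), (∀ j, 0 ≤ mu j) ∧
      (fderiv ℝ f xs + ∑ i, lam i • fderiv ℝ (h i) xs + ∑ j, mu j • fderiv ℝ (g j.1) xs = 0) ∧
      0 ≤ fderiv ℝ (fderiv ℝ f) xs d d + ∑ i, lam i * fderiv ℝ (fderiv ℝ (h i)) xs d d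
        + ∑ j, mu j * fderiv ℝ (fderiv ℝ (g j.1)) xs d d := by
  obtain ⟨hli, d0, hd0, hd1⟩ := hmfcq
  obtain ⟨hdh, hdg⟩ := hd
  have key := alt_mult (fderiv ℝ f xs) (fun i => fderiv ℝ (h i) xs)
    (fun j : {j : Fin p // g j xs = 0} => fderiv ℝ (g j.1) xs)
    ((1 / 2) * fderiv ℝ (fderiv ℝ f) xs d d)
    (fun i => (1 / 2) * fderiv ℝ (fderiv ℝ (h i)) xs d d)
    (fun j => (1 / 2) * fderiv ℝ (fderiv ℝ (g j.1)) xs d d) hli d0 hd0 (fun j => hd1 j.1 j.2) ?_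
  · obtain ⟨lam, mu, hmu, hL, hC⟩ := key
    refine ⟨lam, mu, hmu, hL, ?_⟩
    have e1 : ∑ i, lam i * ((1 / 2) * fderiv ℝ (fderiv ℝ (h i)) xs d d) =
        (1 / 2) * ∑ i, lam i * fderiv ℝ (fderiv ℝ (h i)) xs d d := by
      rw [Finset.mul_sum]; exact Finset.sum_congr rfl fun i _ => by ring
    have e2 : ∑ j, mu j * ((1 / 2) * fderiv ℝ (fderiv ℝ (g j.1)) xs d d) =
        (1 / 2) * ∑ j, mu j * fderiv ℝ (fderiv ℝ (g j.1)) xs d d := by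
      rw [Finset.mul_sum]; exact Finset.sum_congr rfl fun i _ => by ring
    rw [e1, e2] at hC
    linarith
  rintro ⟨w, hwf, hwh, hwg⟩
  have hpos : ∀ᶠ t : ℝ in 𝓝[>] (0 : ℝ), 0 < t := self_mem_nhdsWithin
  -- the vector valued equality constraint
  let H : (Fin n → ℝ) → (Fin m → ℝ) := fun x i => h i x
  have hH : HasStrictFDerivAt H (ContinuousLinearMap.pi fun i => fderiv ℝ (h i) xs) xs := by
    rw [hasStrictFDerivAt_pi']
    intro i
    exact ((hh i).contDiffAt.hasStrictFDerivAt (by norm_num))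
  have hHx : H xs = 0 := by ext i; exact hfeas.1 i
  obtain ⟨ψ, hψ0, hψO⟩ := correction H _ xs hH (pi_surj_of_li _ hli) hHx
  let u0 : ℝ → (Fin n → ℝ) := fun t => t • d + t ^ 2 • w
  have hu0 : Tendsto (fun t => (t ^ 2)⁻¹ • (u0 t - t • d)) (𝓝[>] (0 : ℝ)) (𝓝 w) := by
    refine (tendsto_const_nhds (x := w)).congr' ?_
    filter_upwards [hpos] with t ht
    simp only [u0, add_sub_cancel_left, smul_smul]
    rw [inv_mul_cancel₀ (by positivity), one_smul]
  have hyx : Tendsto (fun t => xs + u0 t) (𝓝[>] (0 : ℝ)) (𝓝 xs) := by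
    have hc : Continuous fun t => xs + u0 t := by fun_prop
    have := hc.tendsto 0
    simp only [u0] at this
    rw [zero_smul, zero_pow two_ne_zero, zero_smul, add_zero, add_zero] at this
    exact this.mono_left nhdsWithin_le_nhds
  have hHo : (fun t => H (xs + u0 t)) =o[𝓝[>] (0 : ℝ)] fun t : ℝ => t ^ 2 := by
    rw [isLittleO_pi]
    intro i
    have := curve_two (h i) (hh i) xs d w (hdh i) u0 hu0
    rw [hwh i, hfeas.1 i] at this
    rw [isLittleO_iff_tendsto']
    · refine this.congr fun t => ?_
      simp only [H]
      rw [sub_zero, div_eq_inv_mul]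
    · filter_upwards [hpos] with t ht h0
      exact absurd h0 (by positivity)
  let u : ℝ → (Fin n → ℝ) := fun t => ψ (xs + u0 t) - xs
  have hxu : ∀ t, xs + u t = ψ (xs + u0 t) := fun t => by simp [u]
  have hu : Tendsto (fun t => (t ^ 2)⁻¹ • (u t - t • d)) (𝓝[>] (0 : ℝ)) (𝓝 w) := by
    have h1 := (hψO.comp_tendsto hyx).trans_isLittleO hHo
    have h2 : Tendsto (fun t => (t ^ 2)⁻¹ • (ψ (xs + u0 t) - (xs + u0 t))) (𝓝[>] (0 : ℝ))
        (𝓝 0) := by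
      have := (isBigO_refl (fun t : ℝ => (t ^ 2)⁻¹) (𝓝[>] (0 : ℝ))).smul_isLittleO h1
      rw [← isLittleO_one_iff ℝ]
      refine this.trans_isBigO ?_
      refine IsBigO.of_bound 1 ?_
      filter_upwards [hpos] with t ht
      rw [smul_eq_mul, inv_mul_cancel₀ (by positivity)]
      simp
    have h3 := h2.add hu0
    rw [zero_add] at h3
    refine h3.congr fun t => ?_
    rw [← smul_add]
    congr 1
    simp only [u]
    abel
  have huxs : Tendsto (fun t => xs + u t) (𝓝[>] (0 : ℝ)) (𝓝 xs) := by
    have hid : Tendsto (fun t : ℝ => t) (𝓝[>] (0 : ℝ)) (𝓝 0) :=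
      tendsto_id.mono_left nhdsWithin_le_nhds
    have h1 := (((hid.pow 2).smul hu).add (hid.smul_const d)).const_add xs
    rw [zero_pow two_ne_zero, zero_smul, zero_smul, add_zero, add_zero] at h1
    refine h1.congr' ?_
    filter_upwards [hpos] with t ht
    rw [smul_smul, mul_inv_cancel₀ (by positivity), one_smul, sub_add_cancel]
  have hfneg : ∀ᶠ t in 𝓝[>] (0 : ℝ), f (xs + u t) < f xs := by
    have := (curve_two f hf xs d w hfd u hu).eventually_lt_const hwf
    filter_upwards [this, hpos] with t h1 h2
    by_contra hc
    have : 0 ≤ (t ^ 2)⁻¹ * (f (xs + u t) - f xs) := mul_nonneg (by positivity) (by linarith)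
    linarith
  have hgneg : ∀ᶠ t in 𝓝[>] (0 : ℝ), ∀ j, g j (xs + u t) ≤ 0 := by
    rw [eventually_all]
    intro j
    by_cases hj : g j xs = 0
    · have := (curve_two (g j) (hg j) xs d w (hdg j hj) u hu).eventually_lt_const (hwg ⟨j, hj⟩)
      filter_upwards [this, hpos] with t h1 h2
      by_contra hc
      have : 0 ≤ (t ^ 2)⁻¹ * (g j (xs + u t) - g j xs) :=
        mul_nonneg (by positivity) (by linarith)
      linarith
    · have hlt : g j xs < 0 := lt_of_le_of_ne (hfeas.2 j) hj
      have := (((hg j).continuous.tendsto xs).comp huxs).eventually_lt_const hlt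
      filter_upwards [this] with t h1
      exact h1.le
  have hh0 : ∀ᶠ t in 𝓝[>] (0 : ℝ), ∀ i, h i (xs + u t) = 0 := by
    filter_upwards [hyx.eventually hψ0] with t ht i
    rw [hxu]
    exact congrFun ht i
  have hmin' : ∀ᶠ x in 𝓝 xs, Feas h g x → f xs ≤ f x := by
    have : ∀ᶠ x in 𝓝[{x | Feas h g x}] xs, f xs ≤ f x := hmin
    rw [eventually_nhdsWithin_iff] at this
    exact this
  obtain ⟨t, h1, h2, h3, h4⟩ :=
    (hfneg.and (hgneg.and (hh0.and (huxs.eventually hmin')))).exists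
  exact absurd (h4 ⟨h3, h2⟩) (not_le.2 h1)

lemma fderiv_Lagr {n m p : ℕ} (f : (Fin n → ℝ) → ℝ) (h : Fin m → (Fin n → ℝ) → ℝ)
    (g : Fin p → (Fin n → ℝ) → ℝ)
    (hf : ContDiff ℝ 2 f) (hh : ∀ i, ContDiff ℝ 2 (h i)) (hg : ∀ j, ContDiff ℝ 2 (g j))
    (lam : Fin m → ℝ) (mu : Fin p → ℝ) (x : Fin n → ℝ) :
    fderiv ℝ (Lagr f h g lam mu) x =
      fderiv ℝ f x + ∑ i, lam i • fderiv ℝ (h i) x + ∑ j, mu j • fderiv ℝ (g j) x := by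
  have two : (2 : WithTop ℕ∞) ≠ 0 := by norm_num
  refine HasFDerivAt.fderiv ?_
  unfold Lagr
  refine ((hf.differentiable two x).hasFDerivAt.add ?_).add ?_
  · exact HasFDerivAt.fun_sum fun i _ => ((hh i).differentiable two x).hasFDerivAt.const_mul _
  · exact HasFDerivAt.fun_sum fun i _ => ((hg i).differentiable two x).hasFDerivAt.const_mul _

lemma hessQ_Lagr {n m p : ℕ} (f : (Fin n → ℝ) → ℝ) (h : Fin m → (Fin n → ℝ) → ℝ)
    (g : Fin p → (Fin n → ℝ) → ℝ)
    (hf : ContDiff ℝ 2 f) (hh : ∀ i, ContDiff ℝ 2 (h i)) (hg : ∀ j, ContDiff ℝ 2 (g j))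
    (lam : Fin m → ℝ) (mu : Fin p → ℝ) (x d : Fin n → ℝ) :
    hessQ (Lagr f h g lam mu) x d =
      fderiv ℝ (fderiv ℝ f) x d d + ∑ i, lam i * fderiv ℝ (fderiv ℝ (h i)) x d d
        + ∑ j, mu j * fderiv ℝ (fderiv ℝ (g j)) x d d := by
  have hD : ∀ φ : (Fin n → ℝ) → ℝ, ContDiff ℝ 2 φ →
      HasFDerivAt (fderiv ℝ φ) (fderiv ℝ (fderiv ℝ φ) x) x := fun φ hφ =>
    ((hφ.fderiv_right (m := 1) (by norm_num)).differentiable (by norm_num) x).hasFDerivAt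
  have e : fderiv ℝ (Lagr f h g lam mu) = fun x =>
      fderiv ℝ f x + ∑ i, lam i • fderiv ℝ (h i) x + ∑ j, mu j • fderiv ℝ (g j) x :=
    funext fun x => fderiv_Lagr f h g hf hh hg lam mu x
  have e2 : fderiv ℝ (fderiv ℝ (Lagr f h g lam mu)) x = fderiv ℝ (fderiv ℝ f) x +
      ∑ i, lam i • fderiv ℝ (fderiv ℝ (h i)) x + ∑ j, mu j • fderiv ℝ (fderiv ℝ (g j)) x := by
    rw [e]
    refine HasFDerivAt.fderiv ?_
    refine ((hD f hf).add ?_).add ?_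
    · exact HasFDerivAt.fun_sum fun i _ => (hD _ (hh i)).const_smul (lam i)
    · exact HasFDerivAt.fun_sum fun i _ => (hD _ (hg i)).const_smul (mu i)
  unfold hessQ
  rw [iteratedFDeriv_two_apply, e2]
  simp

/-- Summation of a function extended by zero outside the active set. -/
lemma sum_ext_zero {p : ℕ} {M : Type*} [AddCommGroup M] [Module ℝ M] (P : Fin p → Prop)
    (mu : {j // P j} → ℝ) (c : Fin p → M) :
    ∑ j, (if hj : P j then mu ⟨j, hj⟩ else 0) • c j = ∑ j : {j // P j}, mu j • c j.1 := by
  rw [← Fintype.sum_subtype_add_sum_subtype P]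
  have h2 : ∑ j : {j // ¬ P j}, (if hj : P j.1 then mu ⟨j.1, hj⟩ else 0) • c j.1 = 0 := by
    refine Finset.sum_eq_zero fun j _ => ?_
    rw [dif_neg j.2, zero_smul]
  rw [h2, add_zero]
  refine Finset.sum_congr rfl fun j _ => ?_
  rw [dif_pos j.2]

/-- MFCQ excludes nontrivial nonnegative dependencies. -/
lemma pos_dep {ι κ : Type} [Fintype ι] [Fintype κ] {n : ℕ}
    (H : ι → (Fin n → ℝ) →L[ℝ] ℝ) (G : κ → (Fin n → ℝ) →L[ℝ] ℝ)
    (hH : LinearIndependent ℝ H)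
    (d0 : Fin n → ℝ) (hd0 : ∀ i, H i d0 = 0) (hd1 : ∀ j, G j d0 < 0)
    (al : ι → ℝ) (be : κ → ℝ) (hbe : ∀ j, 0 ≤ be j)
    (hz : ∑ i, al i • H i + ∑ j, be j • G j = 0) : (∀ i, al i = 0) ∧ ∀ j, be j = 0 := by
  have hd := DFunLike.congr_fun hz d0
  simp only [_root_.add_apply, _root_.sum_apply, _root_.smul_apply, smul_eq_mul, hd0, mul_zero,
    Finset.sum_const_zero, zero_add, _root_.zero_apply] at hd
  have h0 : ∀ j, be j = 0 := by
    intro j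
    have := (Finset.sum_eq_zero_iff_of_nonpos (s := Finset.univ)
      (f := fun j => be j * G j d0)
      (fun j _ => mul_nonpos_of_nonneg_of_nonpos (hbe j) (hd1 j).le)).1 hd j (Finset.mem_univ j)
    rcases mul_eq_zero.1 this with h | h
    · exact h
    · exact absurd h (hd1 j).ne
  refine ⟨?_, h0⟩
  apply Fintype.linearIndependent_iff.1 hH
  simpa [h0] using hz

/-- The rank condition: dependencies form a line. -/
lemma dep_line {n m p : ℕ} (h : Fin m → (Fin n → ℝ) → ℝ)
    (g : Fin p → (Fin n → ℝ) → ℝ) (xs : Fin n → ℝ)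
    (hrank : (Jac h g xs xs).rank + 1 = m + Fintype.card {j : Fin p // g j xs = 0}) :
    ∃ (al : Fin m → ℝ) (be : {j : Fin p // g j xs = 0} → ℝ),
      ¬ ((∀ i, al i = 0) ∧ ∀ j, be j = 0) ∧
      (∑ i, al i • fderiv ℝ (h i) xs + ∑ j, be j • fderiv ℝ (g j.1) xs = 0) ∧
      ∀ (lam : Fin m → ℝ) (mu : {j : Fin p // g j xs = 0} → ℝ),
        (∑ i, lam i • fderiv ℝ (h i) xs + ∑ j, mu j • fderiv ℝ (g j.1) xs = 0) →
        ∃ t : ℝ, (∀ i, lam i = t * al i) ∧ ∀ j, mu j = t * be j := by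
  set K := LinearMap.ker (Jac h g xs xs)ᵀ.mulVecLin with hK
  have hker : ∀ v : (Fin m ⊕ {j : Fin p // g j xs = 0}) → ℝ, v ∈ K ↔
      ∑ i, v (Sum.inl i) • fderiv ℝ (h i) xs + ∑ j, v (Sum.inr j) • fderiv ℝ (g j.1) xs = 0 := by
    intro v
    rw [hK, LinearMap.mem_ker, Matrix.mulVecLin_apply]
    have hk : ∀ k, ((Jac h g xs xs)ᵀ *ᵥ v) k = (∑ i, v (Sum.inl i) • fderiv ℝ (h i) xs +
        ∑ j, v (Sum.inr j) • fderiv ℝ (g j.1) xs) (Pi.single k 1) := by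
      intro k
      simp [Matrix.mulVec, dotProduct, Jac, Fintype.sum_sum_type, mul_comm]
    constructor
    · intro hv
      apply ContinuousLinearMap.coe_injective
      refine LinearMap.pi_ext' fun k => ?_
      ext
      have := hk k
      rw [hv] at this
      simpa using this.symm
    · intro hv
      ext k
      rw [hk, hv]; simp
  have hfin : Module.finrank ℝ K = 1 := by
    have h1 := (Jac h g xs xs)ᵀ.mulVecLin.finrank_range_add_finrank_ker
    have h2 : Module.finrank ℝ (LinearMap.range (Jac h g xs xs)ᵀ.mulVecLin) =
      (Jac h g xs xs).rank := by
      rw [← Matrix.rank_transpose]; rfl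
    rw [h2, Module.finrank_pi, Fintype.card_sum, Fintype.card_fin, ← hK] at h1
    have h3 : (Jac h g xs xs).rank + Module.finrank ℝ K = (Jac h g xs xs).rank + 1 := by
      rw [hrank, h1]
    exact Nat.add_left_cancel h3
  obtain ⟨⟨v, hv⟩, hv0, hvall⟩ := finrank_eq_one_iff'.1 hfin
  refine ⟨fun i => v (Sum.inl i), fun j => v (Sum.inr j), ?_, (hker v).1 hv, ?_⟩
  · rintro ⟨h1, h2⟩
    apply hv0
    ext (i | j)
    · exact h1 i
    · exact h2 j
  · intro lam mu hlm
    obtain ⟨t, ht⟩ := hvall ⟨Sum.elim lam mu, (hker _).2 (by simpa using hlm)⟩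
    have ht' : t • v = Sum.elim lam mu := congrArg Subtype.val ht
    refine ⟨t, fun i => ?_, fun j => ?_⟩
    · simpa using (congrFun ht' (Sum.inl i)).symm
    · simpa using (congrFun ht' (Sum.inr j)).symm


set_option maxHeartbeats 2000000

/-- Baccari–Trad: MFCQ plus rank `J(x*) = m + q - 1` imply WSOC at a local
minimizer. -/
theorem stmt5 {n m p : ℕ} (f : (Fin n → ℝ) → ℝ) (h : Fin m → (Fin n → ℝ) → ℝ)
    (g : Fin p → (Fin n → ℝ) → ℝ)
    (hf : ContDiff ℝ 2 f) (hh : ∀ i, ContDiff ℝ 2 (h i)) (hg : ∀ j, ContDiff ℝ 2 (g j))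
    (xs : Fin n → ℝ) (hfeas : Feas h g xs)
    (hmin : IsLocalMinOn f {x | Feas h g x} xs)
    (hmfcq : MFCQ h g xs)
    (hrank : (Jac h g xs xs).rank + 1 = m + Fintype.card {j : Fin p // g j xs = 0}) :
    ∃ (lam : Fin m → ℝ) (mu : Fin p → ℝ), IsLagMult f h g xs lam mu ∧
      ∀ d, critSub h g xs d → 0 ≤ hessQ (Lagr f h g lam mu) xs d := by
  have hmfcq' := hmfcq
  obtain ⟨hli, d0, hd0, hd1⟩ := hmfcq'
  obtain ⟨al, be, hne, hdep, hline⟩ := dep_line h g xs hrank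
  obtain ⟨lam0, mu0, hmu0, hL0, -⟩ := sonc f h g hf hh hg xs hfeas hmin hmfcq 0 (by simp)
    ⟨fun i => by simp, fun j _ => by simp⟩
  have hsymm : ∀ φ : (Fin n → ℝ) → ℝ, ContDiff ℝ 2 φ → ∀ u v,
      fderiv ℝ (fderiv ℝ φ) xs u v = fderiv ℝ (fderiv ℝ φ) xs v u := by
    intro φ hφ u v
    exact (hφ.contDiffAt.isSymmSndFDerivAt (x := xs) (by simp)).eq u v
  let S : Submodule ℝ (Fin n → ℝ) :=
    { carrier := {d | critSub h g xs d}
      add_mem' := by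
        rintro a b ⟨h1, h2⟩ ⟨k1, k2⟩
        exact ⟨fun i => by rw [map_add, h1, k1, add_zero],
          fun j hj => by rw [map_add, h2 j hj, k2 j hj, add_zero]⟩
      zero_mem' := ⟨fun i => by simp, fun j _ => by simp⟩
      smul_mem' := by
        rintro c a ⟨h1, h2⟩
        exact ⟨fun i => by rw [map_smul, h1, smul_zero],
          fun j hj => by rw [map_smul, h2 j hj, smul_zero]⟩ }
  let A : (Fin n → ℝ) →L[ℝ] (Fin n → ℝ) →L[ℝ] ℝ := fderiv ℝ (fderiv ℝ f) xs +
    ∑ i, lam0 i • fderiv ℝ (fderiv ℝ (h i)) xs +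
    ∑ j, mu0 j • fderiv ℝ (fderiv ℝ (g j.1)) xs
  let B : (Fin n → ℝ) →L[ℝ] (Fin n → ℝ) →L[ℝ] ℝ :=
    ∑ i, al i • fderiv ℝ (fderiv ℝ (h i)) xs +
    ∑ j, be j • fderiv ℝ (fderiv ℝ (g j.1)) xs
  have hAB : ∀ (t : ℝ) d, A d d + t * B d d = fderiv ℝ (fderiv ℝ f) xs d d +
      ∑ i, (lam0 i + t * al i) * fderiv ℝ (fderiv ℝ (h i)) xs d d +
      ∑ j, (mu0 j + t * be j) * fderiv ℝ (fderiv ℝ (g j.1)) xs d d := by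
    intro t d
    simp only [A, B, _root_.add_apply, _root_.sum_apply, _root_.smul_apply, smul_eq_mul, add_mul,
      Finset.sum_add_distrib, mul_add, Finset.mul_sum, mul_assoc]
    ring
  have hA : ∀ x y, A x y = A y x := by
    intro x y
    simp only [A, _root_.add_apply, _root_.sum_apply, _root_.smul_apply]
    rw [hsymm f hf x y]
    simp only [fun i => hsymm (h i) (hh i) x y, fun j => hsymm (g j) (hg j) x y]
  have hB : ∀ x y, B x y = B y x := by
    intro x y
    simp only [B, _root_.add_apply, _root_.sum_apply, _root_.smul_apply]
    simp only [fun i => hsymm (h i) (hh i) x y, fun j => hsymm (g j) (hg j) x y]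
  let T : Set ℝ := {t | ∀ j, 0 ≤ mu0 j + t * be j}
  have hTclosed : IsClosed T := by
    have : T = ⋂ j, {t : ℝ | 0 ≤ mu0 j + t * be j} := by
      ext t; simp only [T, Set.mem_ofPred_eq, Set.mem_iInter]
    rw [this]
    exact isClosed_iInter fun j => isClosed_le (by fun_prop) (by fun_prop)
  have hTconv : Convex ℝ T := by
    intro a ha b hb s r hs hr hsr j
    have h1 := mul_nonneg hs (ha j)
    have h2 := mul_nonneg hr (hb j)
    have e : mu0 j + (s • a + r • b) * be j = s * (mu0 j + a * be j) + r * (mu0 j + b * be j) := by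
      simp only [smul_eq_mul]
      have : mu0 j = (s + r) * mu0 j := by rw [hsr, one_mul]
      linear_combination this
    rw [e]; linarith
  obtain ⟨j1, hj1⟩ : ∃ j, be j < 0 := by
    by_contra hc
    push Not at hc
    exact hne (pos_dep _ _ hli d0 hd0 (fun j => hd1 j.1 j.2) al be hc hdep)
  obtain ⟨j2, hj2⟩ : ∃ j, 0 < be j := by
    by_contra hc
    push Not at hc
    have := pos_dep _ _ hli d0 hd0 (fun j => hd1 j.1 j.2) (fun i => - al i) (fun j => - be j)
      (fun j => by linarith [hc j]) (by
        have e1 : ∑ i, (-al i) • fderiv ℝ (h i) xs = -∑ i, al i • fderiv ℝ (h i) xs := by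
          ext v; simp
        have e2 : ∑ j, (-be j) • fderiv ℝ (g j.1) xs = -∑ j, be j • fderiv ℝ (g j.1) xs := by
          ext v; simp
        rw [e1, e2]
        rw [← neg_add, hdep, neg_zero])
    exact hne ⟨fun i => neg_eq_zero.1 (this.1 i), fun j => neg_eq_zero.1 (this.2 j)⟩
  have hTc : IsCompact T := by
    refine isCompact_Icc.of_isClosed_subset hTclosed
      (?_ : T ⊆ Set.Icc (-mu0 j2 / be j2) (mu0 j1 / (-be j1)))
    intro t ht
    have h1 := ht j1
    have h2 := ht j2
    constructor
    · rw [div_le_iff₀ hj2]; linarith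
    · rw [le_div_iff₀ (by linarith)]; linarith
  have hT0 : (0 : ℝ) ∈ T := fun j => by simpa using hmu0 j
  obtain ⟨t, htT, ht⟩ := yuan_param S A B hA hB T hTc hTconv.isPreconnected ⟨0, hT0⟩ (by
    intro d hd
    have hfd : fderiv ℝ f xs d = 0 := by
      have := DFunLike.congr_fun hL0 d
      simp only [_root_.add_apply, _root_.sum_apply, _root_.smul_apply, smul_eq_mul, hd.1,
        fun j : {j : Fin p // g j xs = 0} => hd.2 j.1 j.2, mul_zero, Finset.sum_const_zero,
        add_zero, _root_.zero_apply] at this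
      exact this
    obtain ⟨lam, mu, hmu, hL, hC⟩ := sonc f h g hf hh hg xs hfeas hmin hmfcq d hfd hd
    obtain ⟨t, ht1, ht2⟩ := hline (fun i => lam i - lam0 i) (fun j => mu j - mu0 j) (by
      have e1 : ∑ i, (lam i - lam0 i) • fderiv ℝ (h i) xs =
          ∑ i, lam i • fderiv ℝ (h i) xs - ∑ i, lam0 i • fderiv ℝ (h i) xs := by
        ext v; simp [sub_mul, Finset.sum_sub_distrib]
      have e2 : ∑ j, (mu j - mu0 j) • fderiv ℝ (g j.1) xs =
          ∑ j, mu j • fderiv ℝ (g j.1) xs - ∑ j, mu0 j • fderiv ℝ (g j.1) xs := by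
        ext v; simp [sub_mul, Finset.sum_sub_distrib]
      rw [e1, e2]
      have := congrArg₂ (· - ·) hL hL0
      simp only [sub_zero] at this
      rw [← this]; abel)
    have e1 : ∀ i, lam0 i + t * al i = lam i := fun i => by linarith [ht1 i]
    have e2 : ∀ j, mu0 j + t * be j = mu j := fun j => by linarith [ht2 j]
    refine ⟨t, fun j => by rw [e2]; exact hmu j, ?_⟩
    rw [hAB]
    simp only [e1, e2]
    exact hC)
  refine ⟨fun i => lam0 i + t * al i,
    fun j => if hj : g j xs = 0 then mu0 ⟨j, hj⟩ + t * be ⟨j, hj⟩ else 0, ⟨?_, ?_, ?_⟩, ?_⟩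
  · intro j
    by_cases hj : g j xs = 0
    · simp only [dif_pos hj]; exact htT ⟨j, hj⟩
    · simp only [dif_neg hj]; exact le_rfl
  · rw [fderiv_Lagr f h g hf hh hg,
      sum_ext_zero (fun j => g j xs = 0) (fun j => mu0 j + t * be j) (fun j => fderiv ℝ (g j) xs)]
    simp only [add_smul, Finset.sum_add_distrib, mul_smul, ← Finset.smul_sum]
    calc _ = (fderiv ℝ f xs + ∑ i, lam0 i • fderiv ℝ (h i) xs +
          ∑ j, mu0 j • fderiv ℝ (g j.1) xs) +
          t • (∑ i, al i • fderiv ℝ (h i) xs + ∑ j, be j • fderiv ℝ (g j.1) xs) := by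
            rw [smul_add]; abel
      _ = 0 := by rw [hL0, hdep, smul_zero, add_zero]
  · intro j
    by_cases hj : g j xs = 0
    · rw [hj, mul_zero]
    · simp only [dif_neg hj, zero_mul]
  · intro d hd
    have h1 := ht d hd
    rw [hAB] at h1
    rw [hessQ_Lagr f h g hf hh hg]
    have := sum_ext_zero (fun j => g j xs = 0) (fun j => mu0 j + t * be j)
      (fun j => fderiv ℝ (fderiv ℝ (g j)) xs d d)
    simp only [smul_eq_mul] at this
    rw [this]
    exact h1
end
end
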